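/- arXiv:2108.09962 — 7 statements merged into one kernel-verified Lean document; each statement's English description precedes it below -/
import Mathlib

section
/- Let d, r, n be positive integers with n > d + r, and let F be a family of n convex sets in R^d (indexed by {1,...,n}, repetitions allowed). If more than C(n, d+1) - C(n-r, d+1) of the (d+1)-element index subsets correspond to intersecting (d+1)-tuples of F, then F contains an intersecting subfamily of size at least d + r + 1. (Here C(a,b) denotes the binomial coefficient.) -/
/-!
Kalai's exterior-algebra argument, in dual form. Put `d = finrank ℝ E` and let `n` convex sets be
given, at most `d + r` of which have a common point. Attach to them `n` vectors in general position
in an `(n - r)`-dimensional space `V`. The space of alternating `(d + 1)`-forms on `V` has dimension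
`(n - r).choose (d + 1)`, so there are at least that many nonintersecting `(d + 1)`-tuples provided
that a form `f` vanishing on all of them is zero.

If `f ≠ 0`, the tuples on which `f` does not vanish are intersecting. Choose one whose intersection
has its lowest point `p` as high as possible, for a fixed strictly convex height. By Helly's theorem
`p` is the lowest point already for `d` members `A` of the tuple, so by the choice of the tuple `p`
lies in every set `y` for which `f` does not vanish on `insert y A`. But at least `n - r` sets
belong to `A` or miss `p`; their vectors span `V`, so `f` vanishes on `insert y A` for every `y`,
and in particular on the chosen tuple.
-/

open Finset Module

theorem exists_range_fin_eq_of_card_eq {α : Type*} {S : Finset α} {k : ℕ} (hS : #S = k) :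
    ∃ s : Fin k → α, Set.range s = S :=
  ⟨Subtype.val ∘ (S.equivFinOfCardEq hS).symm, by rw [EquivLike.range_comp, Subtype.range_coe]⟩

section AlternatingMap

variable {R M N ι κ : Type*} [CommRing R] [AddCommGroup M] [Module R M] [AddCommGroup N]
  [Module R N] {k : ℕ}

theorem injective_of_map_comp_ne_zero {f : M [⋀^κ]→ₗ[R] N} {v : ι → M} {s : κ → ι}
    (hs : f (v ∘ s) ≠ 0) : Function.Injective s := by
  contrapose! hs
  exact f.map_eq_zero_of_not_injective _ fun h => hs h.of_comp

theorem map_comp_ne_zero_of_range_subset [Finite κ] (f : M [⋀^κ]→ₗ[R] N) (v : ι → M)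
    {s t : κ → ι} (hst : Set.range s ⊆ Set.range t) (hs : f (v ∘ s) ≠ 0) : f (v ∘ t) ≠ 0 := by
  classical
  have := Fintype.ofFinite κ
  obtain ⟨σ, rfl⟩ := Set.range_subset_range_iff_exists_comp.1 hst
  have hσ : Function.Bijective σ :=
    Finite.injective_iff_bijective.1 (injective_of_map_comp_ne_zero hs).of_comp
  intro ht
  apply hs
  rw [← Function.comp_assoc]
  exact (f.map_perm (v ∘ t) (.ofBijective σ hσ)).trans (by rw [ht, smul_zero])

/-- The support of an alternating map `f` along a family of vectors `v`: the index sets `S` such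
that `f` does not vanish on the vectors `v i`, `i ∈ S`. Whether it does is independent of their
order, so `S` is presented by an arbitrary enumeration `s`. -/
def alternatingSupport (f : M [⋀^Fin k]→ₗ[R] N) (v : ι → M) : Set (Finset ι) :=
  {S | ∃ s : Fin k → ι, Set.range s = S ∧ f (v ∘ s) ≠ 0}

variable {f : M [⋀^Fin k]→ₗ[R] N} {v : ι → M} {S : Finset ι}

theorem mem_alternatingSupport_iff {s : Fin k → ι} (hs : Set.range s = S) :
    S ∈ alternatingSupport f v ↔ f (v ∘ s) ≠ 0 :=
  ⟨fun ⟨_, ht, hft⟩ => map_comp_ne_zero_of_range_subset f v (ht.trans hs.symm).subset hft,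
    fun h => ⟨s, hs, h⟩⟩

theorem card_eq_of_mem_alternatingSupport (hS : S ∈ alternatingSupport f v) : #S = k := by
  obtain ⟨s, hs, hfs⟩ := hS
  rw [← Set.ncard_coe_finset, ← hs,
    Set.ncard_range_of_injective (injective_of_map_comp_ne_zero hfs), Nat.card_fin]

theorem alternatingSupport_nonempty (hv : Submodule.span R (Set.range v) = ⊤) (hf : f ≠ 0) :
    (alternatingSupport f v).Nonempty := by
  contrapose! hf
  apply exteriorPower.alternatingMapLinearEquiv.injective
  refine LinearMap.ext_on (exteriorPower.ιMulti_span_of_span R k M hv) ?_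
  rintro _ ⟨u, hu, rfl⟩
  obtain ⟨s, rfl⟩ := Set.range_subset_range_iff_exists_comp.1 hu
  have hs : (Set.range s).toFinite.toFinset ∉ alternatingSupport f v := by simp [hf]
  simpa [mem_alternatingSupport_iff (s := s)] using hs

theorem exists_insert_mem_alternatingSupport [DecidableEq ι] {d : ℕ} {f : M [⋀^Fin (d + 1)]→ₗ[R] N}
    {A : Finset ι} (hA : #A = d) {Y : Set ι} (hspan : Submodule.span R (v '' (Y ∪ A)) = ⊤) {x : ι}
    (hx : insert x A ∈ alternatingSupport f v) :
    ∃ y ∈ Y, insert y A ∈ alternatingSupport f v := by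
  obtain ⟨a, ha⟩ := exists_range_fin_eq_of_card_eq hA
  let g : M →ₗ[R] N := f.toMultilinearMap.toLinearMap (Fin.cons 0 (v ∘ a)) 0
  have mem_iff (y : ι) : insert y A ∈ alternatingSupport f v ↔ g (v y) ≠ 0 := by
    rw [mem_alternatingSupport_iff (s := Fin.cons y a) (by simp [Fin.range_cons, ha])]
    simp [g, Fin.comp_cons]
  by_contra! hY
  have hg : g = 0 := by
    refine LinearMap.ext_on hspan ?_
    rintro _ ⟨y, hy | hy, rfl⟩ <;> refine not_not.1 ((mem_iff y).not.1 ?_)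
    · exact hY y hy
    · intro hyA
      have := card_eq_of_mem_alternatingSupport hyA
      rw [insert_eq_of_mem hy] at this
      omega
  exact (mem_iff x).1 hx (by rw [hg, LinearMap.zero_apply])

theorem choose_finrank_le_card_of_forall_eq_zero [Nontrivial R] [Module.Free R M]
    [Module.Finite R M] [Fintype κ] (u : κ → Fin k → M)
    (hu : ∀ f : M [⋀^Fin k]→ₗ[R] R, (∀ j, f (u j) = 0) → f = 0) :
    (finrank R M).choose k ≤ Fintype.card κ := by
  let eval : Dual R (⋀[R]^k M) →ₗ[R] κ → R :=
    LinearMap.pi fun j => Dual.eval R _ (exteriorPower.ιMulti R k (u j))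
  have eval_injective : Function.Injective eval := by
    rw [← LinearMap.ker_eq_bot, LinearMap.ker_eq_bot']
    intro F hF
    obtain ⟨f, rfl⟩ := exteriorPower.alternatingMapLinearEquiv.surjective F
    rw [hu f fun j => by simpa [eval] using congrFun hF j, map_zero]
  calc (finrank R M).choose k = finrank R (Dual R (⋀[R]^k M)) := by
        rw [finrank_linearMap_self, exteriorPower.finrank_eq]
    _ ≤ finrank R (κ → R) := LinearMap.finrank_le_finrank_of_injective eval_injective
    _ = Fintype.card κ := finrank_fintype_fun_eq_card R

theorem choose_finrank_le_card_of_disjoint_alternatingSupport [Nontrivial R] [Module.Free R M]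
    [Module.Finite R M] (v : ι → M) {𝓝 : Finset (Finset ι)} (h𝓝 : ∀ S ∈ 𝓝, #S = k)
    (hv : ∀ f : M [⋀^Fin k]→ₗ[R] R, Disjoint (alternatingSupport f v) 𝓝 → f = 0) :
    (finrank R M).choose k ≤ #𝓝 := by
  choose s hs using fun S : 𝓝 => exists_range_fin_eq_of_card_eq (h𝓝 S S.2)
  rw [← Fintype.card_coe]
  refine choose_finrank_le_card_of_forall_eq_zero (fun S => v ∘ s S) fun f hf => hv f ?_
  exact Set.disjoint_right.2 fun S hS hS' => (mem_alternatingSupport_iff (hs ⟨S, hS⟩)).1 hS' (hf _)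

end AlternatingMap

theorem span_image_pow_eq_top {K ι : Type*} [Field K] {x : ι → K} {T : Finset ι}
    (hx : Set.InjOn x T) {m : ℕ} (hT : m ≤ #T) :
    Submodule.span K ((fun i (j : Fin m) => x i ^ (j : ℕ)) '' T) = ⊤ := by
  obtain ⟨T', hT', hcard⟩ := exists_subset_card_eq hT
  let e := (T'.equivFinOfCardEq hcard).symm
  let V : Matrix (Fin m) (Fin m) K := .vandermonde fun k => x (e k)
  have hV : V.det ≠ 0 := Matrix.det_vandermonde_ne_zero_iff.2 fun a b hab =>
    e.injective (Subtype.ext (hx (hT' (e a).2) (hT' (e b).2) hab))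
  have hrows : Submodule.span K (Set.range V.row) = ⊤ :=
    (Matrix.linearIndependent_rows_of_det_ne_zero hV).span_eq_top_of_card_eq_finrank' (by simp)
  rw [eq_top_iff, ← hrows]
  refine Submodule.span_mono ?_
  rintro _ ⟨k, rfl⟩
  exact ⟨e k, hT' (e k).2, rfl⟩

theorem strictConvexOn_norm_sq {E : Type*} [NormedAddCommGroup E] [InnerProductSpace ℝ E] :
    StrictConvexOn ℝ Set.univ fun x : E => ‖x‖ ^ 2 := by
  have h : StrongConvexOn Set.univ 2 fun x : E => ‖x‖ ^ 2 :=
    strongConvexOn_iff_convex.2 (by simpa using convexOn_const (0 : ℝ) convex_univ)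
  exact h.strictConvexOn two_pos

section Convex

variable {ι E : Type*} [AddCommGroup E]

theorem exists_subset_isMinOn_biInter {𝕜 : Type*} [Field 𝕜] [LinearOrder 𝕜] [IsStrictOrderedRing 𝕜]
    [Module 𝕜 E] [FiniteDimensional 𝕜 E] {φ : E → 𝕜} (hφ : ConvexOn 𝕜 Set.univ φ) {C : ι → Set E}
    (hC : ∀ i, Convex 𝕜 (C i)) {S : Finset ι} (hS : #S = finrank 𝕜 E + 1) {p : E}
    (hp : p ∈ ⋂ i ∈ S, C i) (hmin : IsMinOn φ (⋂ i ∈ S, C i) p) :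
    ∃ A ⊆ S, #A = finrank 𝕜 E ∧ IsMinOn φ (⋂ i ∈ A, C i) p := by
  by_contra! hcon
  -- Helly's theorem applies to the sets of `S` together with the points strictly below `p`.
  let F : Option ι → Set E := fun o => o.elim {z | φ z < φ p} C
  have hF_convex : ∀ o, Convex 𝕜 (F o)
    | none => by simpa [F] using hφ.convex_lt (φ p)
    | some i => hC i
  have hF : (⋂ o ∈ S.insertNone, F o).Nonempty := by
    refine Convex.helly_theorem (𝕜 := 𝕜) (by simp [hS]) (fun o _ => hF_convex o) ?_
    intro I hI hcard
    by_cases hnone : none ∈ I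
    · have hsub : I.eraseNone ⊆ S := fun i hi => by simpa using hI (mem_eraseNone.1 hi)
      have hcard' : #I.eraseNone = finrank 𝕜 E := by
        rw [card_eraseNone_of_mem hnone, hcard, Nat.add_sub_cancel]
      obtain ⟨z, hz, hlt⟩ : ∃ z ∈ ⋂ i ∈ I.eraseNone, C i, φ z < φ p := by
        simpa only [isMinOn_iff, not_forall, not_le, exists_prop] using hcon _ hsub hcard'
      refine ⟨z, Set.mem_iInter₂.2 ?_⟩
      rintro (_ | i) hi
      · exact hlt
      · exact Set.mem_iInter₂.1 hz i (mem_eraseNone.2 hi)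
    · refine ⟨p, Set.mem_iInter₂.2 ?_⟩
      rintro (_ | i) hi
      · exact absurd hi hnone
      · exact Set.mem_iInter₂.1 hp i (by simpa using hI hi)
  obtain ⟨z, hz⟩ := hF
  rw [Set.mem_iInter₂] at hz
  have hlt : φ z < φ p := hz none (by simp)
  exact hlt.not_ge (hmin (Set.mem_iInter₂.2 fun i hi => hz (some i) (by simpa using hi)))

variable [Module ℝ E]

theorem exists_forall_mem_of_insert_mem_of_isCompact [Finite ι] [DecidableEq ι] [TopologicalSpace E]
    [T2Space E] [FiniteDimensional ℝ E] {φ : E → ℝ} (hφ : StrictConvexOn ℝ Set.univ φ)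
    (hφ_cont : Continuous φ) {C : ι → Set E} (hC : ∀ i, Convex ℝ (C i))
    (hC_comp : ∀ i, IsCompact (C i)) {𝓕 : Set (Finset ι)} (h𝓕 : 𝓕.Nonempty)
    (hcard : ∀ S ∈ 𝓕, #S = finrank ℝ E + 1) (hinter : ∀ S ∈ 𝓕, (⋂ i ∈ S, C i).Nonempty) :
    ∃ (A : Finset ι) (x : ι) (p : E), #A = finrank ℝ E ∧ insert x A ∈ 𝓕 ∧ (∀ i ∈ A, p ∈ C i) ∧
      ∀ y, insert y A ∈ 𝓕 → p ∈ C y := by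
  have exists_min (S : Finset ι) (hS : S ∈ 𝓕) :
      ∃ p ∈ ⋂ i ∈ S, C i, IsMinOn φ (⋂ i ∈ S, C i) p := by
    obtain ⟨i, hi⟩ : S.Nonempty := card_pos.1 (by rw [hcard S hS]; omega)
    have hcomp : IsCompact (⋂ i ∈ S, C i) := (hC_comp i).of_isClosed_subset
      (isClosed_biInter fun j _ => (hC_comp j).isClosed) (Set.biInter_subset_of_mem hi)
    exact hcomp.exists_isMinOn (hinter S hS) hφ_cont.continuousOn
  choose! p hp hp_min using exists_min
  obtain ⟨S, hS, hmax⟩ := 𝓕.exists_max_image (fun S => φ (p S)) 𝓕.toFinite h𝓕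
  obtain ⟨A, hAS, hA, hA_min⟩ :=
    exists_subset_isMinOn_biInter hφ.convexOn hC (hcard S hS) (hp S hS) (hp_min S hS)
  obtain ⟨x, -, rfl⟩ := exists_eq_insert_iff.2 ⟨hAS, by rw [hA, hcard S hS]⟩
  have hpA : p (insert x A) ∈ ⋂ i ∈ A, C i := Set.biInter_mono hAS (fun _ _ => subset_rfl) (hp _ hS)
  refine ⟨A, x, p (insert x A), hA, hS, Set.mem_iInter₂.1 hpA, fun y hy => ?_⟩
  have hqA : p (insert y A) ∈ ⋂ i ∈ A, C i :=
    Set.biInter_mono (subset_insert y A) (fun _ _ => subset_rfl) (hp _ hy)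
  have hq_min : IsMinOn φ (⋂ i ∈ A, C i) (p (insert y A)) := fun z hz =>
    (hmax _ hy).trans (hA_min hz)
  have hpq : p (insert x A) = p (insert y A) :=
    (hφ.subset (Set.subset_univ _) (convex_iInter₂ fun i _ => hC i)).eq_of_isMinOn
      hA_min hq_min hpA hqA
  exact hpq ▸ Set.mem_iInter₂.1 (hp _ hy) y (mem_insert_self y A)

theorem exists_convex_isCompact_subset [Finite ι] [TopologicalSpace E] [IsTopologicalAddGroup E]
    [ContinuousSMul ℝ E] {A : ι → Set E} (hA : ∀ i, Convex ℝ (A i)) :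
    ∃ C : ι → Set E, (∀ i, Convex ℝ (C i)) ∧ (∀ i, IsCompact (C i)) ∧ (∀ i, C i ⊆ A i) ∧
      ∀ S : Finset ι, (⋂ i ∈ S, A i).Nonempty → (⋂ i ∈ S, C i).Nonempty := by
  choose! q hq using fun (S : Finset ι) (hS : (⋂ i ∈ S, A i).Nonempty) => hS
  let C (i : ι) : Set E := convexHull ℝ (q '' {S | i ∈ S ∧ (⋂ j ∈ S, A j).Nonempty})
  refine ⟨C, fun i => convex_convexHull ℝ _,
    fun i => ((Set.toFinite _).image q).isCompact_convexHull ℝ,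
    fun i => convexHull_min ?_ (hA i),
    fun S hS => ⟨q S, Set.mem_iInter₂.2 fun i hi => subset_convexHull ℝ _ ⟨S, ⟨hi, hS⟩, rfl⟩⟩⟩
  rintro _ ⟨S, ⟨hi, hS⟩, rfl⟩
  exact Set.mem_iInter₂.1 (hq S hS) i hi

variable [FiniteDimensional ℝ E] {A : ι → Set E}

theorem exists_forall_mem_of_insert_mem [Finite ι] [DecidableEq ι] (hA : ∀ i, Convex ℝ (A i))
    {𝓕 : Set (Finset ι)} (h𝓕 : 𝓕.Nonempty) (hcard : ∀ S ∈ 𝓕, #S = finrank ℝ E + 1)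
    (hinter : ∀ S ∈ 𝓕, (⋂ i ∈ S, A i).Nonempty) :
    ∃ (B : Finset ι) (x : ι) (p : E), #B = finrank ℝ E ∧ insert x B ∈ 𝓕 ∧ (∀ i ∈ B, p ∈ A i) ∧
      ∀ y, insert y B ∈ 𝓕 → p ∈ A y := by
  let e : EuclideanSpace ℝ (Fin (finrank ℝ E)) ≃ₗ[ℝ] E := .ofFinrankEq _ _ (by simp)
  have hinter' (S) (hS : S ∈ 𝓕) : (⋂ i ∈ S, e ⁻¹' A i).Nonempty := by
    simpa only [Set.preimage_iInter] using (hinter S hS).preimage e.surjective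
  obtain ⟨C, hC, hC_comp, hCA, hC_inter⟩ :=
    exists_convex_isCompact_subset fun i => (hA i).linear_preimage e.toLinearMap
  obtain ⟨B, x, p, hB, hx, hpB, hp⟩ := exists_forall_mem_of_insert_mem_of_isCompact
    strictConvexOn_norm_sq (by fun_prop) hC hC_comp h𝓕 (by simpa using hcard)
    fun S hS => hC_inter S (hinter' S hS)
  exact ⟨B, x, e p, by simpa using hB, hx, fun i hi => hCA i (hpB i hi),
    fun y hy => hCA y (hp y hy)⟩

open scoped Classical in
theorem choose_le_card_filter_not_nonempty_biInter [Fintype ι] {r : ℕ} (hA : ∀ i, Convex ℝ (A i))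
    (hr : ∀ S : Finset ι, (⋂ i ∈ S, A i).Nonempty → #S ≤ finrank ℝ E + r) :
    (Fintype.card ι - r).choose (finrank ℝ E + 1) ≤
      #{S ∈ powersetCard (finrank ℝ E + 1) (univ : Finset ι) | ¬ (⋂ i ∈ S, A i).Nonempty} := by
  obtain ⟨x, hx⟩ : ∃ x : ι → ℝ, Function.Injective x :=
    ⟨_, Nat.cast_injective.comp (Fin.val_injective.comp (Fintype.equivFin ι).injective)⟩
  let v (i : ι) (j : Fin (Fintype.card ι - r)) : ℝ := x i ^ (j : ℕ)
  have hv {T : Finset ι} (hT : Fintype.card ι - r ≤ #T) : Submodule.span ℝ (v '' T) = ⊤ :=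
    span_image_pow_eq_top hx.injOn hT
  rw [← finrank_fin_fun ℝ (n := Fintype.card ι - r)]
  refine choose_finrank_le_card_of_disjoint_alternatingSupport v (by simp +contextual) ?_
  intro f hf
  by_contra hf0
  have hcard (S) (hS : S ∈ alternatingSupport f v) := card_eq_of_mem_alternatingSupport hS
  have hinter (S) (hS : S ∈ alternatingSupport f v) : (⋂ i ∈ S, A i).Nonempty := by
    by_contra h
    exact Set.disjoint_left.1 hf hS (by simpa [hcard S hS] using h)
  have hsupp : (alternatingSupport f v).Nonempty :=
    alternatingSupport_nonempty (by simpa using hv (T := univ) (by simp)) hf0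
  obtain ⟨B, x, p, hB, hx, hpB, hp⟩ := exists_forall_mem_of_insert_mem hA hsupp hcard hinter
  let P : Finset ι := {i | p ∈ A i}
  have hP : #P ≤ finrank ℝ E + r := hr P ⟨p, by simp [P]⟩
  have hspan : Submodule.span ℝ (v '' ((Pᶜ : Finset ι) ∪ B)) = ⊤ := by
    have hdisj : Disjoint Pᶜ B := disjoint_right.2 fun i hi => by simpa [P] using hpB i hi
    rw [← coe_union]
    apply hv
    rw [card_union_of_disjoint hdisj, card_compl, hB]
    omega
  obtain ⟨y, hyP, hy⟩ := exists_insert_mem_alternatingSupport hB hspan hx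
  exact absurd (hp y hy) (by simpa [P] using hyP)

open scoped Classical in
theorem stmt0_general [Fintype ι] {r : ℕ} (hA : ∀ i, Convex ℝ (A i))
    (hcount : (Fintype.card ι).choose (finrank ℝ E + 1) -
        (Fintype.card ι - r).choose (finrank ℝ E + 1) <
      #{S ∈ powersetCard (finrank ℝ E + 1) (univ : Finset ι) | (⋂ i ∈ S, A i).Nonempty}) :
    ∃ S : Finset ι, finrank ℝ E + r + 1 ≤ #S ∧ (⋂ i ∈ S, A i).Nonempty := by
  by_contra! hcon
  have hle := choose_le_card_filter_not_nonempty_biInter (r := r) hA fun S hS => by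
    by_contra h
    exact hS.ne_empty (hcon S (by omega))
  have hsum := card_filter_add_card_filter_not (s := powersetCard (finrank ℝ E + 1) univ)
    fun S : Finset ι => (⋂ i ∈ S, A i).Nonempty
  rw [card_powersetCard, card_univ] at hsum
  omega

end Convex

open scoped Classical in
/-- Fractional Helly theorem (exact form) for convex sets in ℝ^d. -/
theorem stmt0 (d r n : ℕ) (hd : 0 < d) (hr : 0 < r) (hn : d + r < n)
    (A : Fin n → Set (Fin d → ℝ)) (hconv : ∀ i, Convex ℝ (A i))
    (hcount : n.choose (d + 1) - (n - r).choose (d + 1) <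
      ((Finset.powersetCard (d + 1) (Finset.univ : Finset (Fin n))).filter
        (fun S : Finset (Fin n) => (⋂ i ∈ S, A i).Nonempty)).card) :
    ∃ S : Finset (Fin n), d + r + 1 ≤ S.card ∧ (⋂ i ∈ S, A i).Nonempty := by
  simpa using stmt0_general (r := r) hconv (by simpa using hcount)
end

section
/- Let d, r, n be positive integers with n >= d + r. Then there exists a family F of n convex sets in R^d satisfying all of the following: (1) every subfamily of F with more than d + (n-d)/(r+1) sets contains d+1 members with a common point; (2) every intersecting subfamily of F has size at most d + r; (3) exactly C(n, d+1) - C(n-r, d+1) of the (d+1)-element subfamilies of F are intersecting. -/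
/-!
In the `d`-dimensional space of polynomials `p` of degree less than `d`, put
`A j = {p | B ^ j ≤ p(j) ≤ 2 * B ^ (j + r)}` with `B` large. By Lagrange interpolation, the value
of `p` at the largest index `j` of a `(d + 1)`-set is a combination, with coefficients bounded
independently of `B`, of its values at the remaining indices. If these are all smaller than `j - r`,
then `p(j)` is too small to reach `B ^ j`. If the largest of them, `m`, satisfies `j ≤ m + r`, then
taking the upper bounds as values at the remaining indices makes the term of `m`, whose coefficient
is at least `1`, dominate and puts `p(j)` into the interval. Thus a `(d + 1)`-subfamily intersects
if and only if its two largest indices differ by at most `r`, and the rest is combinatorics of such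
sets.
-/

open Finset Polynomial

section Lagrange

variable {ι F : Type*} [Field F] {s : Finset ι} {v : ι → F} {p : F[X]}

theorem exists_mem_degreeLT_eval_eq {d : ℕ} (hs : #s = d) (hv : Set.InjOn v s) (y : ι → F) :
    ∃ p ∈ degreeLT F d, ∀ i ∈ s, p.eval (v i) = y i := by
  classical
  exact ⟨Lagrange.interpolate s v y, mem_degreeLT.2 (hs ▸ Lagrange.degree_interpolate_lt y hv),
    fun _ hi => Lagrange.eval_interpolate_at_node y hv hi⟩

variable [DecidableEq ι]

theorem eval_eq_sum_eval_mul_eval_basis (hv : Set.InjOn v s) (hp : p.degree < #s) (x : F) :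
    p.eval x = ∑ i ∈ s, p.eval (v i) * (Lagrange.basis s v i).eval x := by
  conv_lhs => rw [Lagrange.eq_interpolate hv hp]
  simp only [Lagrange.interpolate_apply, eval_finsetSum, eval_mul, eval_C]

variable [LinearOrder F]

/-- The Lebesgue function `x ↦ ∑ i ∈ s, |ℓ i x|` of interpolation at the nodes `v i`, `i ∈ s`: the
factor by which interpolation at `x` amplifies a bound on the values at the nodes. -/
noncomputable def lebesgueFunction (s : Finset ι) (v : ι → F) (x : F) : F :=
  ∑ i ∈ s, |(Lagrange.basis s v i).eval x|

theorem exists_forall_lebesgueFunction_le (t : Finset ι) (v : ι → F) :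
    ∃ C, 0 ≤ C ∧ ∀ s ⊆ t, ∀ j ∈ t, lebesgueFunction s v (v j) ≤ C := by
  obtain ⟨C, hC⟩ :=
    (image (fun q : Finset ι × ι => lebesgueFunction q.1 v (v q.2)) (t.powerset ×ˢ t)).exists_le
  refine ⟨max 0 C, le_max_left _ _, fun s hs j hj => le_max_of_le_right (hC _ ?_)⟩
  exact mem_image_of_mem _ (mk_mem_product (mem_powerset.2 hs) hj)

variable [IsStrictOrderedRing F]

theorem one_le_eval_basis_of_lt {m : ι} {x : F} (hm : ∀ i ∈ s.erase m, v i < v m) (hx : v m ≤ x) :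
    1 ≤ (Lagrange.basis s v m).eval x := by
  rw [Lagrange.basis, eval_prod]
  refine one_le_prod fun i hi => ?_
  have him : 0 < v m - v i := sub_pos.2 (hm i hi)
  simp only [Lagrange.basisDivisor, eval_mul, eval_C, eval_sub, eval_X]
  rw [inv_mul_eq_div, one_le_div him]
  exact sub_le_sub_right hx _

theorem abs_eval_le_mul_lebesgueFunction {M : F} (hv : Set.InjOn v s) (hp : p.degree < #s)
    (hM : ∀ i ∈ s, |p.eval (v i)| ≤ M) (x : F) :
    |p.eval x| ≤ M * lebesgueFunction s v x :=
  calc |p.eval x|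
    _ = |∑ i ∈ s, p.eval (v i) * (Lagrange.basis s v i).eval x| := by
      rw [← eval_eq_sum_eval_mul_eval_basis hv hp]
    _ ≤ ∑ i ∈ s, |p.eval (v i)| * |(Lagrange.basis s v i).eval x| := by
      simp only [← abs_mul]
      exact abs_sum_le_sum_abs _ _
    _ ≤ ∑ i ∈ s, M * |(Lagrange.basis s v i).eval x| := by gcongr with i hi; exact hM i hi
    _ = M * lebesgueFunction s v x := (mul_sum _ _ _).symm

theorem sub_mul_lebesgueFunction_le_eval {M : F} {m : ι} {x : F} (hv : Set.InjOn v s)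
    (hp : p.degree < #s) (hm : m ∈ s) (hlt : ∀ i ∈ s.erase m, v i < v m) (hx : v m ≤ x)
    (hpm : 0 ≤ p.eval (v m)) (hM₀ : 0 ≤ M) (hM : ∀ i ∈ s.erase m, |p.eval (v i)| ≤ M) :
    p.eval (v m) - M * lebesgueFunction s v x ≤ p.eval x := by
  set q := p - C (p.eval (v m)) * Lagrange.basis s v m with hq
  have hq_degree : q.degree < #s := by
    rw [← mem_degreeLT] at hp ⊢
    refine sub_mem hp ?_
    rw [← smul_eq_C_mul]
    refine Submodule.smul_mem _ _ (mem_degreeLT.2 ?_)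
    rw [Lagrange.degree_basis hv hm]
    exact_mod_cast Nat.sub_lt (card_pos.2 ⟨m, hm⟩) one_pos
  have hqM : ∀ i ∈ s, |q.eval (v i)| ≤ M := fun i hi => by
    rcases eq_or_ne i m with rfl | him
    · simpa [hq, Lagrange.eval_basis_self hv hi] using hM₀
    · simpa [hq, Lagrange.eval_basis_of_ne him.symm hi] using hM i (mem_erase.2 ⟨him, hi⟩)
  have hqx := (abs_le.1 (abs_eval_le_mul_lebesgueFunction hv hq_degree hqM x)).1
  have hmx : p.eval (v m) ≤ p.eval (v m) * (Lagrange.basis s v m).eval x :=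
    le_mul_of_one_le_right hpm (one_le_eval_basis_of_lt hlt hx)
  rw [hq, eval_sub, eval_mul, eval_C] at hqx
  linarith

end Lagrange

section Slab

/-- The polynomials of degree less than `d` whose value at `j` is between `B ^ j` and
`2 * B ^ (j + r)`: the convex sets of the extremal family, in the `d`-dimensional space of such
polynomials instead of `ℝ^d`. -/
def slab (d r : ℕ) (B : ℝ) (j : ℕ) : Set (degreeLT ℝ d) :=
  {p | p.1.eval (j : ℝ) ∈ Set.Icc (B ^ j) (2 * B ^ (j + r))}

theorem convex_slab (d r : ℕ) (B : ℝ) (j : ℕ) : Convex ℝ (slab d r B j) :=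
  (convex_Icc (B ^ j) (2 * B ^ (j + r))).linear_preimage (leval (j : ℝ) ∘ₗ (degreeLT ℝ d).subtype)

variable {d r j : ℕ} {B : ℝ} {s : Finset ℕ}

theorem biInter_slab_insert_eq_empty (hs : #s = d) (hsj : s ⊆ range (j - r)) (hB : 1 ≤ B)
    (hsB : 2 * lebesgueFunction s (↑) (j : ℝ) < B) : ⋂ i ∈ insert j s, slab d r B i = ∅ := by
  refine Set.eq_empty_of_forall_notMem fun p hp => ?_
  simp only [slab, Set.mem_iInter, Set.mem_ofPred_eq, Set.mem_Icc] at hp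
  have hB₀ : 0 < B := by linarith
  have hdeg : p.1.degree < #s := by rw [hs]; exact mem_degreeLT.1 p.2
  have hnodes : ∀ i ∈ s, |p.1.eval (i : ℝ)| ≤ 2 * B ^ j / B := fun i hi => by
    obtain ⟨hlower, hupper⟩ := hp i (mem_insert_of_mem hi)
    have hij : i + r + 1 ≤ j := by have := mem_range.1 (hsj hi); omega
    rw [abs_of_nonneg ((by positivity : 0 ≤ B ^ i).trans hlower), le_div_iff₀ hB₀]
    calc p.1.eval (i : ℝ) * B ≤ 2 * B ^ (i + r) * B := by gcongr
      _ = 2 * B ^ (i + r + 1) := by ring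
      _ ≤ 2 * B ^ j := by gcongr
  have hlt : p.1.eval (j : ℝ) < B ^ j :=
    calc p.1.eval (j : ℝ) ≤ 2 * B ^ j / B * lebesgueFunction s (↑) (j : ℝ) :=
          (le_abs_self _).trans <| abs_eval_le_mul_lebesgueFunction Nat.cast_injective.injOn hdeg
            hnodes _
      _ = B ^ j * (2 * lebesgueFunction s (↑) (j : ℝ) / B) := by ring
      _ < B ^ j := mul_lt_of_lt_one_right (by positivity) ((div_lt_one hB₀).2 hsB)
  exact hlt.not_ge (hp j (mem_insert_self j s)).1

section Extremal

variable {m : ℕ} {p : ℝ[X]}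

theorem pow_le_eval_of_eval_eq_two_mul_pow (hp : p.degree < #s)
    (hpi : ∀ i ∈ s, p.eval (i : ℝ) = 2 * B ^ (i + r)) (hm : m ∈ s) (hmax : ∀ i ∈ s, i ≤ m)
    (hmj : m ≤ j) (hjm : j ≤ m + r) (hB : 1 ≤ B)
    (hsB : 2 * lebesgueFunction s (↑) (j : ℝ) < B) : B ^ j ≤ p.eval (j : ℝ) := by
  have hB₀ : 0 < B := by linarith
  have hlt : ∀ i ∈ s.erase m, i < m := fun i hi =>
    (hmax i (mem_of_mem_erase hi)).lt_of_ne (ne_of_mem_erase hi)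
  have hM : ∀ i ∈ s.erase m, |p.eval (i : ℝ)| ≤ 2 * B ^ (m + r) / B := fun i hi => by
    have him : i + r + 1 ≤ m + r := by have := hlt i hi; omega
    rw [hpi i (mem_of_mem_erase hi), abs_of_pos (by positivity), le_div_iff₀ hB₀, mul_assoc,
      ← pow_succ]
    gcongr
  calc B ^ j ≤ B ^ (m + r) := pow_le_pow_right₀ hB hjm
    _ = 2 * B ^ (m + r) - B ^ (m + r) * 1 := by ring
    _ ≤ 2 * B ^ (m + r) - B ^ (m + r) * (2 * lebesgueFunction s (↑) (j : ℝ) / B) := by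
      gcongr
      exact ((div_lt_one hB₀).2 hsB).le
    _ = p.eval (m : ℝ) - 2 * B ^ (m + r) / B * lebesgueFunction s (↑) (j : ℝ) := by
      rw [hpi m hm]; ring
    _ ≤ p.eval (j : ℝ) := sub_mul_lebesgueFunction_le_eval Nat.cast_injective.injOn hp hm
      (fun i hi => Nat.cast_lt.2 (hlt i hi)) (Nat.cast_le.2 hmj)
      (by rw [hpi m hm]; positivity) (by positivity) hM

theorem eval_le_pow_of_eval_eq_two_mul_pow (hp : p.degree < #s)
    (hpi : ∀ i ∈ s, p.eval (i : ℝ) = 2 * B ^ (i + r)) (hmax : ∀ i ∈ s, i ≤ m) (hmj : m < j)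
    (hB : 1 ≤ B) (hsB : 2 * lebesgueFunction s (↑) (j : ℝ) < B) :
    p.eval (j : ℝ) ≤ B ^ (j + r) := by
  have hM : ∀ i ∈ s, |p.eval (i : ℝ)| ≤ 2 * B ^ (m + r) := fun i hi => by
    have him := hmax i hi
    rw [hpi i hi, abs_of_pos (by positivity)]
    gcongr
  calc p.eval (j : ℝ) ≤ 2 * B ^ (m + r) * lebesgueFunction s (↑) (j : ℝ) :=
        (le_abs_self _).trans
          (abs_eval_le_mul_lebesgueFunction Nat.cast_injective.injOn hp hM _)
    _ = B ^ (m + r) * (2 * lebesgueFunction s (↑) (j : ℝ)) := by ring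
    _ ≤ B ^ (m + r) * B := by gcongr
    _ = B ^ (m + r + 1) := (pow_succ _ _).symm
    _ ≤ B ^ (j + r) := pow_le_pow_right₀ hB (by omega)

end Extremal

theorem biInter_slab_insert_nonempty (hd : 0 < d) (hs : #s = d) (hsj : s ⊆ range j)
    (hsr : ¬ s ⊆ range (j - r)) (hB : 1 ≤ B) (hsB : 2 * lebesgueFunction s (↑) (j : ℝ) < B) :
    (⋂ i ∈ insert j s, slab d r B i).Nonempty := by
  have hne : s.Nonempty := card_pos.1 (hs ▸ hd)
  have hmax : ∀ i ∈ s, i ≤ s.max' hne := fun i hi => s.le_max' i hi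
  have hmj : s.max' hne < j := mem_range.1 (hsj (s.max'_mem hne))
  have hjm : j ≤ s.max' hne + r := by
    by_contra! hlt
    exact hsr fun i hi => mem_range.2 (by have := hmax i hi; omega)
  have hpow_le (k : ℕ) : B ^ k ≤ 2 * B ^ k := le_mul_of_one_le_left (by positivity) one_le_two
  obtain ⟨p, hp, hpi⟩ := exists_mem_degreeLT_eval_eq hs
    (Nat.cast_injective (R := ℝ)).injOn fun i => 2 * B ^ (i + r)
  have hdeg : p.degree < #s := by rw [hs]; exact mem_degreeLT.1 hp
  refine ⟨⟨p, hp⟩, Set.mem_iInter₂.2 fun i hi => ?_⟩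
  rcases mem_insert.1 hi with rfl | hi
  · exact ⟨pow_le_eval_of_eval_eq_two_mul_pow hdeg hpi (s.max'_mem hne) hmax hmj.le hjm hB hsB,
      (eval_le_pow_of_eval_eq_two_mul_pow hdeg hpi hmax hmj hB hsB).trans (hpow_le _)⟩
  · exact ⟨(pow_le_pow_right₀ hB (Nat.le_add_right i r)).trans ((hpow_le _).trans (hpi i hi).ge),
      (hpi i hi).le⟩

end Slab

section TopGap

/-- `T` has an element exceeding every other element of `T` by more than `r`. The `(d + 1)`-sets of
indices with this property are those whose members in the extremal family do not intersect. -/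
def HasTopGap (r : ℕ) (T : Finset ℕ) : Prop :=
  ∃ j ∈ T, ∀ i ∈ T, i ≠ j → i + r < j

instance (r : ℕ) : DecidablePred (HasTopGap r) := fun T =>
  inferInstanceAs (Decidable (∃ j ∈ T, ∀ i ∈ T, i ≠ j → i + r < j))

theorem exists_eq_insert_of_card_eq_succ {k : ℕ} {T : Finset ℕ} (hT : #T = k + 1) :
    ∃ j, ∃ s ⊆ range j, #s = k ∧ T = insert j s := by
  have hne : T.Nonempty := card_pos.1 (by omega)
  refine ⟨T.max' hne, T.erase (T.max' hne), fun i hi => ?_, ?_, ?_⟩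
  · exact mem_range.2 (T.lt_max'_of_mem_erase_max' hne hi)
  · rw [card_erase_of_mem (T.max'_mem hne), hT, Nat.add_sub_cancel]
  · exact (insert_erase (T.max'_mem hne)).symm

variable {d r n j : ℕ} {s : Finset ℕ}

theorem hasTopGap_insert_iff (hs : s ⊆ range j) :
    HasTopGap r (insert j s) ↔ s ⊆ range (j - r) := by
  have hlt : ∀ i ∈ s, i < j := fun i hi => mem_range.1 (hs hi)
  constructor
  · rintro ⟨k, hk, hgap⟩ i hi
    have hkj : k = j := by
      by_contra hne
      have hkj := hlt k (mem_of_mem_insert_of_ne hk hne)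
      have hjk := hgap j (mem_insert_self j s) (Ne.symm hne)
      omega
    have hij := hgap i (mem_insert_of_mem hi) (hkj ▸ (hlt i hi).ne)
    exact mem_range.2 (by omega)
  · intro hsr
    refine ⟨j, mem_insert_self j s, fun i hi hij => ?_⟩
    have hir := mem_range.1 (hsr (mem_of_mem_insert_of_ne hi hij))
    omega

theorem add_mul_le_of_forall_hasTopGap (hd : 0 < d) {t : ℕ} {S : Finset ℕ} (hSn : S ⊆ range n)
    (hS : #S = d + t) (hgap : ∀ T ⊆ S, #T = d + 1 → HasTopGap r T) : d + t * (r + 1) ≤ n := by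
  induction t generalizing n S with
  | zero => simpa [hS] using card_le_card hSn
  | succ t ih =>
    obtain ⟨j, s, hsj, hs, rfl⟩ := exists_eq_insert_of_card_eq_succ (k := d + t) hS
    have hsr : s ⊆ range (j - r) := fun i hi => by
      obtain ⟨X, hiX, hXs, hX⟩ := exists_subsuperset_card_eq (singleton_subset_iff.2 hi)
        (n := d) (by rwa [card_singleton]) (by omega)
      have hXj := hXs.trans hsj
      have hXgap := hgap (insert j X) (insert_subset_insert j hXs)
        (by rw [card_insert_of_notMem fun h => notMem_range_self (hXj h), hX])
      exact (hasTopGap_insert_iff hXj).1 hXgap (singleton_subset_iff.1 hiX)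
    have hle := ih hsr hs fun T hT => hgap T (hT.trans (subset_insert j s))
    have hjn : j < n := mem_range.1 (hSn (mem_insert_self j s))
    rw [add_mul]
    omega

theorem exists_not_hasTopGap_of_lt_card (hd : 0 < d) (hdn : d ≤ n) {S : Finset ℕ}
    (hSn : S ⊆ range n) (hS : (d : ℝ) + ((n : ℝ) - d) / (r + 1) < #S) :
    ∃ T ⊆ S, #T = d + 1 ∧ ¬ HasTopGap r T := by
  by_contra! hgap
  have hdn' : (d : ℝ) ≤ n := Nat.cast_le.2 hdn
  have hdS : d ≤ #S := by
    have h₀ : 0 ≤ ((n : ℝ) - d) / (r + 1) := div_nonneg (sub_nonneg.2 hdn') (by positivity)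
    exact_mod_cast (le_add_of_nonneg_right h₀).trans hS.le
  obtain ⟨t, ht⟩ := Nat.exists_eq_add_of_le hdS
  have hle : (d : ℝ) + t * (r + 1) ≤ n := mod_cast add_mul_le_of_forall_hasTopGap hd hSn ht hgap
  rw [ht, Nat.cast_add, add_lt_add_iff_left, div_lt_iff₀ (by positivity)] at hS
  linarith

theorem exists_hasTopGap_of_lt_card {S : Finset ℕ} (hS : d + r < #S) :
    ∃ T ⊆ S, #T = d + 1 ∧ HasTopGap r T := by
  obtain ⟨k, hk⟩ := Nat.exists_eq_add_of_lt hS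
  obtain ⟨j, s, hsj, hs, rfl⟩ := exists_eq_insert_of_card_eq_succ hk
  have htop : #(s \ range (j - r)) ≤ r :=
    calc #(s \ range (j - r)) ≤ #(range j \ range (j - r)) :=
          card_le_card (sdiff_subset_sdiff hsj subset_rfl)
      _ = j - (j - r) := by
        rw [card_sdiff_of_subset (range_subset_range.2 (Nat.sub_le j r)), card_range, card_range]
      _ ≤ r := by omega
  have hlow := card_sdiff_add_card_inter s (range (j - r))
  obtain ⟨X, hX, hXd⟩ := exists_subset_card_eq (s := s ∩ range (j - r)) (n := d) (by omega)
  have hXs := hX.trans inter_subset_left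
  refine ⟨insert j X, insert_subset_insert j hXs, ?_, ?_⟩
  · rw [card_insert_of_notMem fun h => notMem_range_self (hsj (hXs h)), hXd]
  · exact (hasTopGap_insert_iff (hXs.trans hsj)).2 (hX.trans inter_subset_right)

theorem filter_hasTopGap_image_insert (d r n : ℕ) :
    ((powersetCard d (range n)).image (insert n)).filter (HasTopGap r) =
      (powersetCard d (range (n - r))).image (insert n) := by
  rw [filter_image]
  congr 1
  ext s
  simp only [mem_filter, mem_powersetCard]
  constructor
  · rintro ⟨⟨hsn, hs⟩, hgap⟩
    exact ⟨(hasTopGap_insert_iff hsn).1 hgap, hs⟩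
  · rintro ⟨hsr, hs⟩
    have hsn : s ⊆ range n := hsr.trans (range_subset_range.2 (Nat.sub_le n r))
    exact ⟨⟨hsn, hs⟩, (hasTopGap_insert_iff hsn).2 hsr⟩

theorem card_filter_hasTopGap (hd : 0 < d) (r n : ℕ) :
    #{T ∈ powersetCard (d + 1) (range n) | HasTopGap r T} = (n - r).choose (d + 1) := by
  induction n with
  | zero => simp
  | succ n ih =>
    have hdisj : Disjoint (powersetCard (d + 1) (range n))
        ((powersetCard d (range n)).image (insert n)) := by
      refine disjoint_left.2 fun T hT hT' => ?_
      obtain ⟨s, -, rfl⟩ := mem_image.1 hT'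
      exact notMem_range_self ((mem_powersetCard.1 hT).1 (mem_insert_self n s))
    have hnotMem : ∀ s ∈ powersetCard d (range (n - r)), n ∉ s := fun s hs hns => by
      have hn := mem_range.1 ((mem_powersetCard.1 hs).1 hns)
      omega
    have hinj : Set.InjOn (insert n) (powersetCard d (range (n - r)) : Set (Finset ℕ)) :=
      insert_erase_invOn.2.injOn.mono hnotMem
    rw [range_add_one, powersetCard_succ_insert notMem_range_self, filter_union,
      card_union_of_disjoint (disjoint_filter_filter hdisj), ih, filter_hasTopGap_image_insert,
      card_image_of_injOn hinj, card_powersetCard, card_range]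
    rcases le_or_gt r n with hrn | hrn
    · rw [Nat.succ_sub hrn, Nat.choose_succ_succ, add_comm]
    · rw [Nat.sub_eq_zero_of_le hrn.le, Nat.sub_eq_zero_of_le hrn,
        Nat.choose_eq_zero_of_lt hd, add_zero]

theorem card_filter_not_hasTopGap_map (hd : 0 < d) (r n : ℕ) :
    #{T ∈ powersetCard (d + 1) (univ : Finset (Fin n)) | ¬ HasTopGap r (T.map Fin.valEmbedding)} =
      n.choose (d + 1) - (n - r).choose (d + 1) := by
  have hrange : range n = (univ : Finset (Fin n)).map Fin.valEmbedding := by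
    rw [Fin.map_valEmbedding_univ, Nat.Iio_eq_range]
  have hgap : #{T ∈ powersetCard (d + 1) (univ : Finset (Fin n)) |
      HasTopGap r (T.map Fin.valEmbedding)} = (n - r).choose (d + 1) := by
    rw [← card_filter_hasTopGap hd, hrange, powersetCard_map, filter_map, card_map]
    rfl
  have htotal := card_filter_add_card_filter_not
    (s := powersetCard (d + 1) (univ : Finset (Fin n)))
    (fun T => HasTopGap r (T.map Fin.valEmbedding))
  rw [hgap, card_powersetCard, card_fin] at htotal
  omega

end TopGap

theorem exists_slab_biInter_nonempty_iff {d : ℕ} (hd : 0 < d) (r n : ℕ) :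
    ∃ B : ℝ, ∀ T ⊆ range n, #T = d + 1 →
      ((⋂ i ∈ T, slab d r B i).Nonempty ↔ ¬ HasTopGap r T) := by
  obtain ⟨C, hC, hCle⟩ := exists_forall_lebesgueFunction_le (range n) ((↑) : ℕ → ℝ)
  refine ⟨2 * C + 1, fun T hTn hT => ?_⟩
  obtain ⟨j, s, hsj, hs, rfl⟩ := exists_eq_insert_of_card_eq_succ hT
  obtain ⟨hj, hsn⟩ := insert_subset_iff.1 hTn
  have hB : 1 ≤ 2 * C + 1 := by linarith
  have hsB : 2 * lebesgueFunction s (↑) (j : ℝ) < 2 * C + 1 := by linarith [hCle s hsn j hj]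
  rw [hasTopGap_insert_iff hsj]
  exact ⟨fun hne hsr => hne.ne_empty (biInter_slab_insert_eq_empty hs hsr hB hsB),
    fun hsr => biInter_slab_insert_nonempty hd hs hsj hsr hB hsB⟩

theorem map_valEmbedding_subset_range {n : ℕ} (S : Finset (Fin n)) :
    S.map Fin.valEmbedding ⊆ range n := fun i hi => by
  obtain ⟨k, -, rfl⟩ := mem_map.1 hi
  exact mem_range.2 k.2

theorem exists_convex_biInter_nonempty_iff {d : ℕ} (hd : 0 < d) (r n : ℕ) :
    ∃ A : Fin n → Set (Fin d → ℝ), (∀ i, Convex ℝ (A i)) ∧ ∀ T : Finset (Fin n), #T = d + 1 →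
      ((⋂ i ∈ T, A i).Nonempty ↔ ¬ HasTopGap r (T.map Fin.valEmbedding)) := by
  obtain ⟨B, hB⟩ := exists_slab_biInter_nonempty_iff hd r n
  let e := (degreeLTEquiv ℝ d).symm
  refine ⟨fun i => e ⁻¹' slab d r B i,
    fun i => (convex_slab d r B i).linear_preimage e.toLinearMap, fun T hT => ?_⟩
  rw [← hB _ (map_valEmbedding_subset_range T) (by rwa [card_map]), ← Set.preimage_iInter₂,
    e.surjective.nonempty_preimage]
  simp only [mem_map, Set.iInter_exists, Set.biInter_and', Set.iInter_iInter_eq_right,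
    Fin.valEmbedding_apply]

open scoped Classical in
/-- Extremal family for the fractional Helly theorem for convex sets in ℝ^d
satisfying a `(p, d+1)`-condition. -/
theorem stmt4 (d r n : ℕ) (hd : 0 < d) (hr : 0 < r) (hn : d + r ≤ n) :
    ∃ A : Fin n → Set (Fin d → ℝ),
      (∀ i, Convex ℝ (A i)) ∧
      (∀ S : Finset (Fin n),
        (d : ℝ) + ((n : ℝ) - (d : ℝ)) / ((r : ℝ) + 1) < (S.card : ℝ) →
        ∃ T ⊆ S, T.card = d + 1 ∧ (⋂ i ∈ T, A i).Nonempty) ∧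
      (∀ S : Finset (Fin n), (⋂ i ∈ S, A i).Nonempty → S.card ≤ d + r) ∧
      ((Finset.powersetCard (d + 1) (Finset.univ : Finset (Fin n))).filter
          (fun S : Finset (Fin n) => (⋂ i ∈ S, A i).Nonempty)).card
        = n.choose (d + 1) - (n - r).choose (d + 1) := by
  obtain ⟨A, hA, hAT⟩ := exists_convex_biInter_nonempty_iff hd r n
  refine ⟨A, hA, fun S hS => ?_, fun S hS => ?_, ?_⟩
  · obtain ⟨T', hT'S, hT', hgap⟩ := exists_not_hasTopGap_of_lt_card hd (by omega)
      (map_valEmbedding_subset_range S) (by rwa [card_map])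
    obtain ⟨T, hTS, rfl⟩ := subset_map_iff.1 hT'S
    rw [card_map] at hT'
    exact ⟨T, hTS, hT', (hAT T hT').2 hgap⟩
  · by_contra! hlt
    obtain ⟨T', hT'S, hT', hgap⟩ := exists_hasTopGap_of_lt_card (S := S.map Fin.valEmbedding)
      (by rwa [card_map])
    obtain ⟨T, hTS, rfl⟩ := subset_map_iff.1 hT'S
    rw [card_map] at hT'
    exact (hAT T hT').1 (hS.mono (Set.biInter_subset_biInter_left hTS)) hgap
  · rw [← card_filter_not_hasTopGap_map hd]
    exact congrArg card (filter_congr fun T hT => hAT T (mem_powersetCard.1 hT).2)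
end

section
/- Let d, t, r, n be positive integers with n > d + r and r >= (t-1)d. Then there exists a family F of n sets from F_{t,d} such that exactly g_d(n,t,r) of the (d+1)-element subfamilies of F are intersecting and the maximal size of an intersecting subfamily of F is exactly d + r. -/
/-- `S ∈ 𝓕_{t,d}`: `S ⊆ (ℝ^d)^t` is a Cartesian product `A_1 × ⋯ × A_t`
of convex sets `A_i ⊆ ℝ^d`. -/
def IsProdOfConvex (t d : ℕ) (S : Set (Fin t → Fin d → ℝ)) : Prop :=
  ∃ A : Fin t → Set (Fin d → ℝ), (∀ j, Convex ℝ (A j)) ∧ S = {x | ∀ j, x j ∈ A j}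

/-- `g_d(n,t,r) = C(n,d+1) - min { ∑_i C(n_i, d+1) : n_1 + ⋯ + n_t = n - r + (t-1)d }`. -/
noncomputable def gFun (d n t r : ℕ) : ℕ :=
  n.choose (d + 1) -
    sInf {m : ℕ | ∃ f : Fin t → ℕ,
      (∑ i, f i) = n - r + (t - 1) * d ∧ m = ∑ i, (f i).choose (d + 1)}

/-!
Split off disjoint blocks `B_1, …, B_t` of total size `n - r + (t - 1) d` from an `n`-element index
set, take hyperplanes `H_k` of `ℝ^d` in general position, and let the `j`-th factor of the `k`-th
product be `H_k` if `k ∈ B_j` and all of `ℝ^d` otherwise. Since any `d` of the hyperplanes have a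
common point and no `d + 1` of them do, a subfamily is intersecting if and only if it has at most
`d` members in each block. The non-intersecting `(d + 1)`-subfamilies are thus those contained in a
block. If every block has size at least `d`, a largest intersecting subfamily arises by deleting all
but `d` members of each block, so it has size `n - (n - r + (t - 1) d) + t d = d + r`. Block sizes
minimizing `∑ i, C(n_i, d + 1)` are indeed all at least `d`: otherwise some block has size above
`d`, and moving one of its elements to a block of size below `d` decreases the sum.
-/

section

open Finset Function Polynomial

section GeneralPosition

variable {K : Type*}

/-- The hyperplane of points `x` for which `a` is a root of the monic polynomial
`X ^ d + ∑ l, x l * X ^ l`; its normal vector `(1, a, …, a ^ (d - 1))` lies on the moment curve.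
These hyperplanes serve as an infinite family in general position. -/
def momentHyperplane [CommRing K] (d : ℕ) (a : K) : Set (Fin d → K) :=
  {x | a ^ d + ∑ l, x l * a ^ (l : ℕ) = 0}

lemma convex_momentHyperplane [Field K] [LinearOrder K] [IsStrictOrderedRing K] (d : ℕ) (a : K) :
    Convex K (momentHyperplane d a) := by
  intro x (hx : _ = 0) y (hy : _ = 0) u v _ _ huv
  calc
    a ^ d + ∑ l, (u * x l + v * y l) * a ^ (l : ℕ) =
        u * (a ^ d + ∑ l, x l * a ^ (l : ℕ)) + v * (a ^ d + ∑ l, y l * a ^ (l : ℕ)) := by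
      simp only [add_mul, mul_assoc, sum_add_distrib, ← mul_sum]
      linear_combination -huv * a ^ d
    _ = 0 := by rw [hx, hy, mul_zero, mul_zero, add_zero]

lemma card_le_of_forall_mem_momentHyperplane [CommRing K] [IsDomain K] {d : ℕ} {s : Finset K}
    {x : Fin d → K} (hx : ∀ a ∈ s, x ∈ momentHyperplane d a) : #s ≤ d := by
  set q : K[X] := ∑ l, C (x l) * X ^ (l : ℕ) with hq
  have hqd : q.degree < d := degree_sum_fin_lt x
  have hroots : s.val ⊆ (X ^ d + q).roots := fun a ha ↦ by
    rw [mem_roots (monic_X_pow_add hqd).ne_zero]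
    simpa [hq, eval_finsetSum, momentHyperplane] using hx a ha
  calc
    #s ≤ (X ^ d + q).natDegree := card_le_degree_of_subset_roots hroots
    _ = d := natDegree_eq_of_degree_eq_some <| by
      rw [degree_add_eq_left_of_degree_lt (by rwa [degree_X_pow]), degree_X_pow]

lemma exists_forall_mem_momentHyperplane [CommRing K] [Nontrivial K] {d : ℕ} {s : Finset K}
    (hs : #s ≤ d) :
    ∃ x, ∀ a ∈ s, x ∈ momentHyperplane d a := by
  let p : K[X] := X ^ (d - #s) * ∏ a ∈ s, (X - C a)
  have hp : p.Monic := (monic_X_pow _).mul (monic_prod_X_sub_C id s)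
  have hpd : p.natDegree = d := by
    simp [p, (monic_X_pow _).natDegree_mul (monic_prod_X_sub_C (fun a ↦ a) s),
      natDegree_finsetProd_X_sub_C_eq_card, hs]
  refine ⟨fun l ↦ p.coeff l, fun a ha ↦ ?_⟩
  calc
    a ^ d + ∑ l : Fin d, p.coeff l * a ^ (l : ℕ) = p.eval a := by
      rw [Fin.sum_univ_eq_sum_range fun l ↦ p.coeff l * a ^ l, eval_eq_sum_range, hpd,
        sum_range_succ, ← hpd, hp.coeff_natDegree, one_mul, add_comm]
    _ = 0 := by simp [p, eval_prod, prod_eq_zero ha]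

lemma nonempty_iInter_momentHyperplane_iff [CommRing K] [IsDomain K] {α : Type*} {a : α → K}
    (ha : Injective a) {d : ℕ} (S : Finset α) :
    (⋂ k ∈ S, momentHyperplane d (a k)).Nonempty ↔ #S ≤ d := by
  rw [← card_map ⟨a, ha⟩]
  constructor
  · rintro ⟨x, hx⟩
    exact card_le_of_forall_mem_momentHyperplane (x := x) (by simpa using hx)
  · intro hS
    obtain ⟨x, hx⟩ := exists_forall_mem_momentHyperplane hS
    exact ⟨x, by simpa using hx⟩

end GeneralPosition

section BlockProduct

variable {α ι E : Type*}

/-- The product whose `j`-th factor is `H k` if `k` belongs to the block `B j`, and the whole space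
otherwise. The extremal families consist of these products for hyperplanes `H k` in general
position. -/
def blockProduct (B : ι → Finset α) (H : α → Set E) (k : α) : Set (ι → E) :=
  Set.pi {j | k ∈ B j} fun _ ↦ H k

lemma iInter_blockProduct [DecidableEq α] (B : ι → Finset α) (H : α → Set E) (S : Finset α) :
    ⋂ k ∈ S, blockProduct B H k = Set.univ.pi fun j ↦ ⋂ k ∈ S ∩ B j, H k := by
  ext x
  simp only [blockProduct, Set.mem_iInter, Set.mem_pi, Set.mem_ofPred_eq, Set.mem_univ,
    forall_const, mem_inter]
  grind

lemma nonempty_iInter_blockProduct_iff [DecidableEq α] {B : ι → Finset α} {H : α → Set E} {d : ℕ}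
    (hH : ∀ S : Finset α, (⋂ k ∈ S, H k).Nonempty ↔ #S ≤ d) (S : Finset α) :
    (⋂ k ∈ S, blockProduct B H k).Nonempty ↔ ∀ j, #(S ∩ B j) ≤ d := by
  simp only [iInter_blockProduct, Set.univ_pi_nonempty_iff, hH]

lemma isProdOfConvex_blockProduct {t d : ℕ} (B : Fin t → Finset α) {H : α → Set (Fin d → ℝ)}
    (hH : ∀ k, Convex ℝ (H k)) (k : α) : IsProdOfConvex t d (blockProduct B H k) := by
  refine ⟨fun j ↦ {y | k ∈ B j → y ∈ H k}, fun j ↦ ?_, rfl⟩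
  by_cases hk : k ∈ B j
  · simpa [hk] using hH k
  · simpa [hk] using convex_univ

end BlockProduct

section Blocks

variable {α ι : Type*}

lemma card_inter_le_iff_not_subset [DecidableEq α] {d : ℕ} {S T : Finset α} (hS : #S = d + 1) :
    #(S ∩ T) ≤ d ↔ ¬ S ⊆ T := by
  rw [← not_lt, not_iff_not, ← inter_eq_left]
  exact ⟨fun h ↦ eq_of_subset_of_card_le inter_subset_left (by omega), fun h ↦ by rw [h]; omega⟩

variable [Fintype ι]

lemma exists_pairwise_disjoint_card_eq [Fintype α] {f : ι → ℕ} (hf : ∑ i, f i ≤ Fintype.card α) :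
    ∃ B : ι → Finset α, (∀ i, #(B i) = f i) ∧ Pairwise (Disjoint on B) := by
  obtain ⟨e⟩ : Nonempty ((Σ i, Fin (f i)) ↪ α) :=
    Embedding.nonempty_of_card_le (by simpa using hf)
  let A (i : ι) : Finset (Σ i, Fin (f i)) := univ.map (.sigmaMk i)
  have hA : ((univ : Finset ι) : Set ι).PairwiseDisjoint A := pairwiseDisjoint_map_sigmaMk
  exact ⟨fun i ↦ (A i).map e, fun i ↦ by simp [A], fun i j hij ↦
    (disjoint_map e).2 (hA (mem_coe.2 (mem_univ i)) (mem_coe.2 (mem_univ j)) hij)⟩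

variable [DecidableEq α] {B : ι → Finset α} {d : ℕ}

lemma card_biUnion_powersetCard_succ (hB : Pairwise (Disjoint on B)) :
    #(univ.biUnion fun j ↦ powersetCard (d + 1) (B j)) = ∑ j, (#(B j)).choose (d + 1) := by
  simp only [← card_powersetCard]
  refine card_biUnion fun i _ j _ hij ↦ disjoint_left.2 fun S hi hj ↦ ?_
  rw [mem_powersetCard] at hi hj
  obtain rfl : S = ∅ := subset_empty.1 (hB hij hi.1 hj.1)
  simp at hi

variable [Fintype α]

lemma card_filter_forall_card_inter_le (hB : Pairwise (Disjoint on B))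
    [DecidablePred fun S : Finset α ↦ ∀ j, #(S ∩ B j) ≤ d] :
    #{S ∈ powersetCard (d + 1) (univ : Finset α) | ∀ j, #(S ∩ B j) ≤ d} =
      (Fintype.card α).choose (d + 1) - ∑ j, (#(B j)).choose (d + 1) := by
  have hfilter : {S ∈ powersetCard (d + 1) (univ : Finset α) | ∀ j, #(S ∩ B j) ≤ d} =
      powersetCard (d + 1) univ \ univ.biUnion fun j ↦ powersetCard (d + 1) (B j) := by
    ext S
    simp +contextual [mem_powersetCard, card_inter_le_iff_not_subset]
  rw [hfilter, card_sdiff_of_subset, card_powersetCard, card_univ,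
    card_biUnion_powersetCard_succ hB]
  exact biUnion_subset.2 fun j _ ↦ powersetCard_mono (subset_univ _)

lemma card_add_sum_card_le_of_card_inter_le (hB : Pairwise (Disjoint on B)) {S : Finset α}
    (hS : ∀ j, #(S ∩ B j) ≤ d) :
    #S + ∑ j, #(B j) ≤ Fintype.card α + Fintype.card ι * d := by
  have houtside : ∑ j, #(B j \ S) ≤ #Sᶜ := by
    rw [← card_biUnion fun i _ j _ hij ↦ (hB hij).mono sdiff_subset sdiff_subset]
    exact card_le_card (biUnion_subset.2 fun j _ ↦ by simp [sdiff_eq_inter_compl])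
  calc
    #S + ∑ j, #(B j) = #S + (∑ j, #(B j \ S) + ∑ j, #(S ∩ B j)) := by
      simp only [← sum_add_distrib, inter_comm S, card_sdiff_add_card_inter]
    _ ≤ #S + (#Sᶜ + ∑ _j : ι, d) := by gcongr; exact hS _
    _ = Fintype.card α + Fintype.card ι * d := by
      rw [← add_assoc, card_add_card_compl, sum_const, card_univ, smul_eq_mul]

lemma exists_card_inter_le_card_add_sum_card_eq (hB : Pairwise (Disjoint on B))
    (hd : ∀ j, d ≤ #(B j)) :
    ∃ S : Finset α, (∀ j, #(S ∩ B j) ≤ d) ∧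
      #S + ∑ j, #(B j) = Fintype.card α + Fintype.card ι * d := by
  choose C hCB hC using fun j ↦ exists_subset_card_eq (hd j)
  let D := univ.biUnion fun j ↦ B j \ C j
  have hD : #D = ∑ j, #(B j \ C j) :=
    card_biUnion fun i _ j _ hij ↦ (hB hij).mono sdiff_subset sdiff_subset
  refine ⟨Dᶜ, fun j ↦ ?_, ?_⟩
  · rw [← hC j]
    refine card_le_card fun k hk ↦ ?_
    simp only [D, mem_inter, mem_compl, mem_biUnion, mem_univ, mem_sdiff] at hk
    grind
  · calc
      #Dᶜ + ∑ j, #(B j) = #Dᶜ + (#D + ∑ _j : ι, d) := by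
        rw [hD, ← sum_add_distrib]
        congr! with j
        rw [← hC j, card_sdiff_add_card_eq_card (hCB j)]
      _ = Fintype.card α + Fintype.card ι * d := by
        rw [← add_assoc, card_compl_add_card, sum_const, card_univ, smul_eq_mul]

end Blocks

section BlockSizes

variable {ι : Type*} [Fintype ι] {d : ℕ}

lemma exists_sum_eq_sum_choose_lt {f : ι → ℕ} (hf : Fintype.card ι * d ≤ ∑ i, f i) {i : ι}
    (hi : f i < d) :
    ∃ g : ι → ℕ, ∑ k, g k = ∑ k, f k ∧
      ∑ k, (g k).choose (d + 1) < ∑ k, (f k).choose (d + 1) := by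
  classical
  obtain ⟨j, hj⟩ : ∃ j, d < f j := by
    by_contra! h
    have : ∑ k, f k < ∑ _k : ι, d := sum_lt_sum (fun k _ ↦ h k) ⟨i, mem_univ i, hi⟩
    simp only [sum_const, card_univ, smul_eq_mul] at this
    omega
  have hle : Pi.single j 1 ≤ f := update_le_iff.2 ⟨Nat.one_le_of_lt hj, by simp⟩
  obtain ⟨h, rfl⟩ : ∃ h : ι → ℕ, f = h + Pi.single j 1 := ⟨_, (tsub_add_cancel_of_le hle).symm⟩
  obtain rfl | hij := eq_or_ne i j
  · omega
  have hhi : h i < d := by simpa [hij] using hi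
  have hhj : d ≤ h j := by simpa [Nat.lt_succ_iff] using hj
  refine ⟨h + Pi.single i 1, by simp [sum_add_distrib],
    sum_lt_sum (fun k _ ↦ ?_) ⟨j, mem_univ j, ?_⟩⟩
  · obtain rfl | hki := eq_or_ne k i
    · simp [Nat.choose_eq_zero_of_lt, hhi]
    · exact Nat.choose_le_choose (d + 1) (by simp [hki])
  · simpa [hij.symm, Nat.choose_succ_succ'] using Nat.choose_pos hhj

lemma exists_isLeast_sum_choose [Nonempty ι] {N : ℕ} (hN : Fintype.card ι * d ≤ N) :
    ∃ f : ι → ℕ, ∑ i, f i = N ∧ (∀ i, d ≤ f i) ∧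
      IsLeast {m | ∃ g : ι → ℕ, ∑ i, g i = N ∧ m = ∑ i, (g i).choose (d + 1)}
        (∑ i, (f i).choose (d + 1)) := by
  classical
  set M := {m | ∃ g : ι → ℕ, ∑ i, g i = N ∧ m = ∑ i, (g i).choose (d + 1)}
  have hM : M.Nonempty := ⟨_, Pi.single (Classical.arbitrary ι) N, by simp, rfl⟩
  obtain ⟨f, hfN, hf⟩ := Nat.sInf_mem hM
  have hleast : IsLeast M (∑ i, (f i).choose (d + 1)) :=
    hf ▸ ⟨Nat.sInf_mem hM, fun m hm ↦ Nat.sInf_le hm⟩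
  refine ⟨f, hfN, fun i ↦ ?_, hleast⟩
  by_contra! hi
  obtain ⟨g, hgN, hg⟩ := exists_sum_eq_sum_choose_lt (hN.trans_eq hfN.symm) hi
  exact hg.not_ge (hleast.2 ⟨g, hgN.trans hfN, rfl⟩)

lemma exists_gFun_eq_choose_sub_sum_choose {t n r : ℕ} (ht : 0 < t) (hn : d + r ≤ n) :
    ∃ f : Fin t → ℕ, ∑ i, f i = n - r + (t - 1) * d ∧ (∀ i, d ≤ f i) ∧
      gFun d n t r = n.choose (d + 1) - ∑ i, (f i).choose (d + 1) := by
  have : NeZero t := ⟨ht.ne'⟩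
  have hN : Fintype.card (Fin t) * d ≤ n - r + (t - 1) * d := by
    rw [Fintype.card_fin, ← Nat.sub_add_cancel (Nat.le_mul_of_pos_left d ht), ← Nat.sub_one_mul]
    omega
  obtain ⟨f, hsum, hd, hmin⟩ := exists_isLeast_sum_choose hN
  exact ⟨f, hsum, hd, by rw [gFun, hmin.csInf_eq]⟩

end BlockSizes

end

open scoped Classical in
/-- Sharpness of the fractional Helly theorem for Cartesian products of convex sets:
a family with exactly `g_d(n,t,r)` intersecting `(d+1)`-tuples whose largest
intersecting subfamily has size exactly `d + r`. -/
theorem stmt6 (d t r n : ℕ) (hd : 0 < d) (ht : 0 < t) (hr : 0 < r) (hn : d + r < n)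
    (hrt : (t - 1) * d ≤ r) :
    ∃ F : Fin n → Set (Fin t → Fin d → ℝ),
      (∀ i, IsProdOfConvex t d (F i)) ∧
      ((Finset.powersetCard (d + 1) (Finset.univ : Finset (Fin n))).filter
          (fun S : Finset (Fin n) => (⋂ i ∈ S, F i).Nonempty)).card = gFun d n t r ∧
      (∀ S : Finset (Fin n), (⋂ i ∈ S, F i).Nonempty → S.card ≤ d + r) ∧
      (∃ S : Finset (Fin n), S.card = d + r ∧ (⋂ i ∈ S, F i).Nonempty) := by
  have htd : t * d = (t - 1) * d + d := by
    rw [Nat.sub_one_mul, Nat.sub_add_cancel (Nat.le_mul_of_pos_left d ht)]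
  obtain ⟨f, hsum, hdf, hg⟩ := exists_gFun_eq_choose_sub_sum_choose ht hn.le
  obtain ⟨B, hBf, hB⟩ := exists_pairwise_disjoint_card_eq (α := Fin n) (f := f)
    (by rw [Fintype.card_fin]; omega)
  obtain rfl : (fun j ↦ (B j).card) = f := funext hBf
  have hinj : Function.Injective fun k : Fin n ↦ (k : ℝ) :=
    Nat.cast_injective.comp Fin.val_injective
  have hF := nonempty_iInter_blockProduct_iff (B := B)
    (nonempty_iInter_momentHyperplane_iff hinj (d := d))
  refine ⟨blockProduct B fun k ↦ momentHyperplane d (k : ℝ),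
    isProdOfConvex_blockProduct B fun k ↦ convex_momentHyperplane d (k : ℝ), ?_, fun S hS ↦ ?_, ?_⟩
  · simp only [hF]
    rw [hg, card_filter_forall_card_inter_le hB, Fintype.card_fin]
  · have := card_add_sum_card_le_of_card_inter_le hB ((hF S).1 hS)
    simp only [Fintype.card_fin, hsum] at this
    omega
  · obtain ⟨S, hS, hcard⟩ := exists_card_inter_le_card_add_sum_card_eq hB hdf
    simp only [Fintype.card_fin, hsum] at hcard
    exact ⟨S, by omega, (hF S).2 hS⟩
end

section
/- Let d, n, r be positive integers with n >= d + r. Then there exist n convex sets A_1, A_2, ..., A_n in R^d such that for every choice of indices 1 <= i_1 < i_2 < ... < i_{d+1} <= n, the intersection of A_{i_1}, A_{i_2}, ..., A_{i_{d+1}} is nonempty if and only if i_{d+1} - i_d <= r. -/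
/-!
On the line, the intervals `[i - r, i]` work. To pass from dimension `d` to `d + 1`, one seeks
convex sets such that `A_i` meets `⋂_{j ∈ S} A_j`, for a nonempty set `S` of indices above `i`,
exactly when `⋂_{j ∈ S} B_j ≠ ∅`, where `(B_j)` is the family in dimension `d`: then the smallest
of `d + 2` indices plays no role.

Take a convex body `K` containing all `B_j`, and let `A_j` be the join of `B_j` at height `0` and
`K` at height `w_j`, with `w_j` growing rapidly in `j`. At height `w_i` the set `A_i` contains all
of `K`, so common points of the `B_j` lift. Conversely, at heights at most `w_i` the slices of
`A_j`, `j > i`, stay as close to `B_j` as desired, and compact sets having no common point still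
have none after a slight thickening.
-/

open Filter Metric Set Topology

section Thickening

variable {X ι κ : Type*} [MetricSpace X]

theorem eventually_nonempty_iInter_of_thickening {B : κ → Set X} (hB : ∀ k, IsCompact (B k)) :
    ∀ᶠ ε in 𝓝[>] (0 : ℝ), (⋂ k, thickening ε (B k)).Nonempty → (⋂ k, B k).Nonempty := by
  by_cases hne : (⋂ k, B k).Nonempty
  · exact .of_forall fun _ _ ↦ hne
  rcases isEmpty_or_nonempty κ with _ | ⟨⟨k₀⟩⟩
  · exact .of_forall fun _ h ↦ by simpa only [iInter_of_empty] using h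
  have hcover : B k₀ ⊆ ⋃ k, (B k)ᶜ := by
    rw [← compl_iInter, not_nonempty_iff_eq_empty.1 hne, compl_empty]
    exact subset_univ _
  obtain ⟨δ, hδ, hball⟩ := lebesgue_number_lemma_of_metric (hB k₀)
    (fun k ↦ (hB k).isClosed.isOpen_compl) hcover
  filter_upwards [Ioo_mem_nhdsGT (half_pos hδ)] with ε hε ⟨x, hx⟩
  have hnear (k : κ) : ∃ b ∈ B k, dist x b < ε := mem_thickening_iff.1 (mem_iInter.1 hx k)
  obtain ⟨b, hb, hxb⟩ := hnear k₀
  obtain ⟨k, hk⟩ := hball b hb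
  obtain ⟨c, hc, hxc⟩ := hnear k
  have hcb : dist c b < δ := by linarith [dist_triangle_left c b x, hε.2]
  exact absurd hc (hk hcb)

theorem exists_pos_nonempty_biInter_of_thickening [Finite ι] {B : ι → Set X}
    (hB : ∀ i, IsCompact (B i)) :
    ∃ ε > 0, ∀ S : Set ι, (⋂ i ∈ S, thickening ε (B i)).Nonempty → (⋂ i ∈ S, B i).Nonempty := by
  have hev : ∀ᶠ ε in 𝓝[>] (0 : ℝ), ∀ S : Set ι,
      (⋂ i ∈ S, thickening ε (B i)).Nonempty → (⋂ i ∈ S, B i).Nonempty :=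
    eventually_all.2 fun S ↦ by
      simpa only [biInter_eq_iInter] using
        eventually_nonempty_iInter_of_thickening fun i : S ↦ hB i
  exact (eventually_mem_nhdsWithin.and hev).exists

end Thickening

section ConvexBody

variable {E F : Type*} [AddCommGroup E] [Module ℝ E] [TopologicalSpace E]
  [AddCommGroup F] [Module ℝ F] [TopologicalSpace F]

/-- The image of a convex body under a continuous linear map, used to change coordinates. -/
def mapConvexBody (φ : E →L[ℝ] F) (K : ConvexBody E) : ConvexBody F where
  carrier := φ '' K
  convex' := K.convex.linear_image φ.toLinearMap
  isCompact' := K.isCompact.image φ.continuous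
  nonempty' := K.nonempty.image φ

variable [ContinuousAdd E] [ContinuousSMul ℝ E]

theorem isCompact_convexJoin {s t : Set E} (hs : IsCompact s) (ht : IsCompact t) :
    IsCompact (convexJoin ℝ s t) := by
  have hjoin : convexJoin ℝ s t =
      (fun p : ℝ × E × E ↦ AffineMap.lineMap p.2.1 p.2.2 p.1) '' (Icc 0 1 ×ˢ s ×ˢ t) := by
    ext x
    simp only [mem_convexJoin, segment_eq_image_lineMap, mem_image, mem_prod, Prod.exists]
    tauto
  rw [hjoin]
  refine (isCompact_Icc.prod (hs.prod ht)).image ?_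
  simp only [AffineMap.lineMap_apply_module]
  fun_prop

/-- The convex body in `ℝ × E` that opens up from `B` at height `0` to `K` at height `w`; it is the
building block of the sets in dimension one higher. The first coordinate is the height. -/
def flare (K B : ConvexBody E) (w : ℝ) : ConvexBody (ℝ × E) where
  carrier := convexJoin ℝ ({0} ×ˢ B) ({w} ×ˢ K)
  convex' := ((convex_singleton 0).prod B.convex).convexJoin ((convex_singleton w).prod K.convex)
  isCompact' := isCompact_convexJoin (isCompact_singleton.prod B.isCompact)
    (isCompact_singleton.prod K.isCompact)
  nonempty' := ((singleton_nonempty 0).prod B.nonempty).mono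
    (subset_convexJoin_left ((singleton_nonempty w).prod K.nonempty))

variable {K B : ConvexBody E} {w : ℝ}

theorem mem_flare {p : ℝ × E} :
    p ∈ flare K B w ↔
      ∃ b ∈ B, ∃ k ∈ K, ∃ c ∈ Icc (0 : ℝ) 1, p = (c * w, AffineMap.lineMap b k c) := by
  change p ∈ convexJoin ℝ _ _ ↔ _
  simp only [mem_convexJoin, segment_eq_image_lineMap, mem_image, mem_prod, Prod.exists,
    mem_singleton_iff, SetLike.mem_coe]
  constructor
  · rintro ⟨_, b, ⟨rfl, hb⟩, _, k, ⟨rfl, hk⟩, c, hc, rfl⟩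
    exact ⟨b, hb, k, hk, c, hc, by ext <;> simp [AffineMap.lineMap_apply]⟩
  · rintro ⟨b, hb, k, hk, c, hc, rfl⟩
    exact ⟨0, b, ⟨rfl, hb⟩, w, k, ⟨rfl, hk⟩, c, hc, by ext <;> simp [AffineMap.lineMap_apply]⟩

theorem top_mem_flare {x : E} (hx : x ∈ K) : (w, x) ∈ flare K B w := by
  obtain ⟨b, hb⟩ := B.nonempty
  exact mem_flare.2 ⟨b, hb, x, hx, 1, by simp, by simp⟩

theorem mk_mem_flare (hBK : B ≤ K) (hw : 0 < w) {t : ℝ} (ht : t ∈ Icc 0 w) {x : E} (hx : x ∈ B) :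
    (t, x) ∈ flare K B w :=
  mem_flare.2 ⟨x, hx, x, hBK hx, t / w, ⟨div_nonneg ht.1 hw.le, div_le_one_of_le₀ ht.2 hw.le⟩, by
    rw [div_mul_cancel₀ t hw.ne', AffineMap.lineMap_same_apply]⟩

theorem fst_le_of_mem_flare (hw : 0 ≤ w) {p : ℝ × E} (hp : p ∈ flare K B w) : p.1 ≤ w := by
  obtain ⟨b, -, k, -, c, hc, rfl⟩ := mem_flare.1 hp
  exact mul_le_of_le_one_left hw hc.2

end ConvexBody

section NormedSpace

variable {E : Type*} [NormedAddCommGroup E] [NormedSpace ℝ E]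

theorem exists_convexBody_forall_le {ι : Type*} [Finite ι] [ProperSpace E]
    (B : ι → ConvexBody E) : ∃ K : ConvexBody E, ∀ i, B i ≤ K := by
  have hbdd : Bornology.IsBounded (⋃ i, (B i : Set E)) :=
    (isCompact_iUnion fun i ↦ (B i).isCompact).isBounded
  obtain ⟨R, hR, hsub⟩ := hbdd.subset_closedBall_lt 0 0
  exact ⟨⟨closedBall 0 R, convex_closedBall 0 R, isCompact_closedBall 0 R,
    nonempty_closedBall.2 hR.le⟩, fun i ↦ (subset_iUnion (fun i ↦ (B i : Set E)) i).trans hsub⟩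

theorem exists_dist_le_of_mem_flare {K B : ConvexBody E} {w : ℝ} (hBK : B ≤ K) (hw : 0 ≤ w)
    {p : ℝ × E} (hp : p ∈ flare K B w) :
    ∃ b ∈ B, w * dist p.2 b ≤ p.1 * diam (K : Set E) := by
  obtain ⟨b, hb, k, hk, c, hc, rfl⟩ := mem_flare.1 hp
  refine ⟨b, hb, ?_⟩
  calc w * dist (AffineMap.lineMap b k c) b = c * w * dist b k := by
        rw [dist_lineMap_left, Real.norm_of_nonneg hc.1]; ring
    _ ≤ c * w * diam (K : Set E) :=
        mul_le_mul_of_nonneg_left (dist_le_diam_of_mem K.isCompact.isBounded (hBK hb) hk)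
          (mul_nonneg hc.1 hw)

end NormedSpace

section IntersectionLift

variable {ι X Y Z : Type*}

/-- The family `A` lifts `B` when, for each nonempty set `S` of indices above `i`, the members of
`A` indexed by `i` and `S` have a common point exactly when the members of `B` indexed by `S` do.
This is the relation between the families in consecutive dimensions. -/
def IsIntersectionLift [LT ι] (A : ι → Set X) (B : ι → Set Y) : Prop :=
  ∀ ⦃i : ι⦄ ⦃S : Set ι⦄, S.Nonempty → (∀ j ∈ S, i < j) →
    ((A i ∩ ⋂ j ∈ S, A j).Nonempty ↔ (⋂ j ∈ S, B j).Nonempty)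

theorem IsIntersectionLift.image [LT ι] {A : ι → Set X} {B : ι → Set Y}
    (h : IsIntersectionLift A B) {φ : X → Z} (hφ : φ.Bijective) :
    IsIntersectionLift (fun i ↦ φ '' A i) B := by
  intro i S hS hiS
  rw [← h hS hiS, ← image_iInter₂ hφ, ← image_inter hφ.injective, image_nonempty]

theorem isIntersectionLift_flare {E : Type*} [NormedAddCommGroup E] [NormedSpace ℝ E] [Preorder ι]
    {K : ConvexBody E} {B : ι → ConvexBody E} (hBK : ∀ i, B i ≤ K) {ε : ℝ}
    (hε : ∀ S : Set ι, (⋂ i ∈ S, thickening ε (B i : Set E)).Nonempty →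
      (⋂ i ∈ S, (B i : Set E)).Nonempty)
    {w : ι → ℝ} (hw : ∀ i, 0 < w i) (hmono : Monotone w)
    (hgrowth : ∀ i j, i < j → w i * diam (K : Set E) < w j * ε) :
    IsIntersectionLift (fun i ↦ (flare K (B i) (w i) : Set (ℝ × E))) (fun i ↦ (B i : Set E)) := by
  rintro i S ⟨j₀, hj₀⟩ hiS
  constructor
  · rintro ⟨p, hpi, hpS⟩
    refine hε S ⟨p.2, mem_iInter₂.2 fun j hj ↦ ?_⟩
    obtain ⟨b, hb, hpb⟩ :=
      exists_dist_le_of_mem_flare (hBK j) (hw j).le (mem_iInter₂.1 hpS j hj)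
    have hlt : w j * dist p.2 b < w j * ε :=
      calc w j * dist p.2 b ≤ p.1 * diam (K : Set E) := hpb
        _ ≤ w i * diam (K : Set E) :=
          mul_le_mul_of_nonneg_right (fst_le_of_mem_flare (hw i).le hpi) diam_nonneg
        _ < w j * ε := hgrowth i j (hiS j hj)
    exact mem_thickening_iff.2 ⟨b, hb, lt_of_mul_lt_mul_left hlt (hw j).le⟩
  · rintro ⟨x, hx⟩
    have hxB (j : ι) (hj : j ∈ S) : x ∈ B j := mem_iInter₂.1 hx j hj
    refine ⟨(w i, x), top_mem_flare (hBK j₀ (hxB j₀ hj₀)), mem_iInter₂.2 fun j hj ↦ ?_⟩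
    exact mk_mem_flare (hBK j) (hw j) ⟨(hw i).le, hmono (hiS j hj).le⟩ (hxB j hj)

theorem exists_pow_growth (D : ℝ) {ε : ℝ} (hε : 0 < ε) :
    ∃ M : ℝ, 1 ≤ M ∧ ∀ a b : ℕ, a < b → M ^ a * D < M ^ b * ε := by
  obtain ⟨M, hM⟩ := exists_gt (max 1 (D / ε))
  obtain ⟨hM1, hMD⟩ := max_lt_iff.1 hM
  have : 0 < M := one_pos.trans hM1
  refine ⟨M, hM1.le, fun a b hab ↦ ?_⟩
  calc M ^ a * D < M ^ a * (M * ε) := by gcongr; exact (div_lt_iff₀ hε).1 hMD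
    _ = M ^ (a + 1) * ε := by ring
    _ ≤ M ^ b * ε := by gcongr; exacts [hM1.le, hab]

theorem exists_convexBody_isIntersectionLift {E : Type*} [NormedAddCommGroup E] [NormedSpace ℝ E]
    [ProperSpace E] {n : ℕ} (B : Fin n → ConvexBody E) :
    ∃ A : Fin n → ConvexBody (ℝ × E),
      IsIntersectionLift (fun i ↦ (A i : Set (ℝ × E))) (fun i ↦ (B i : Set E)) := by
  obtain ⟨K, hBK⟩ := exists_convexBody_forall_le B
  obtain ⟨ε, hε, hthick⟩ := exists_pos_nonempty_biInter_of_thickening fun i ↦ (B i).isCompact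
  obtain ⟨M, hM, hgrowth⟩ := exists_pow_growth (diam (K : Set E)) hε
  exact ⟨fun i ↦ flare K (B i) (M ^ (i : ℕ)),
    isIntersectionLift_flare hBK hthick (fun i ↦ pow_pos (one_pos.trans_le hM) _)
      (fun i j hij ↦ pow_le_pow_right₀ hM hij) fun i j hij ↦ hgrowth i j hij⟩

end IntersectionLift

section GapFamily

variable {X Y : Type*} {n r d : ℕ}

/-- A family of sets in which an increasing `(d + 2)`-tuple has a common point exactly when its
last two indices differ by at most `r`; such a family of convex sets is wanted in dimension `d + 1`.
The shift in `d` guarantees that there is a second to last index. -/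
def IsGapFamily (r d : ℕ) (A : Fin n → Set X) : Prop :=
  ∀ f : Fin (d + 2) → Fin n, StrictMono f →
    ((⋂ j, A (f j)).Nonempty ↔
      (f (Fin.last (d + 1))).val - (f (Fin.last d).castSucc).val ≤ r)

theorem IsGapFamily.of_isIntersectionLift {A : Fin n → Set X} {B : Fin n → Set Y}
    (hB : IsGapFamily r d B) (hAB : IsIntersectionLift A B) : IsGapFamily r (d + 1) A := by
  intro f hf
  have hsplit : ⋂ j, A (f j) = A (f 0) ∩ ⋂ i ∈ range (f ∘ Fin.succ), A i := by
    ext x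
    simp only [mem_iInter, Fin.forall_fin_succ (P := fun j ↦ x ∈ A (f j)), mem_inter_iff,
      biInter_range, Function.comp_apply]
  have habove : ∀ i ∈ range (f ∘ Fin.succ), f 0 < i := by
    rintro _ ⟨j, rfl⟩
    exact hf j.succ_pos
  rw [hsplit, hAB (range_nonempty _) habove, biInter_range]
  exact hB (f ∘ Fin.succ) (hf.comp Fin.strictMono_succ)

theorem isGapFamily_Icc (n r : ℕ) :
    IsGapFamily r 0 fun i : Fin n ↦ Icc (fun _ : Fin 1 ↦ (i : ℝ) - r) (fun _ ↦ (i : ℝ)) := by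
  intro f hf
  have h01 : (f 0 : ℕ) < f 1 := hf Fin.zero_lt_one
  have hinter : (⋂ j, Icc (fun _ : Fin 1 ↦ (f j : ℝ) - r) (fun _ ↦ (f j : ℝ))).Nonempty ↔
      (f 1 : ℝ) - r ≤ f 0 := by
    constructor
    · rintro ⟨x, hx⟩
      exact ((mem_iInter.1 hx 1).1 0).trans ((mem_iInter.1 hx 0).2 0)
    · refine fun h ↦ ⟨fun _ ↦ (f 0 : ℝ), mem_iInter.2 (Fin.forall_fin_two.2 ⟨?_, ?_⟩)⟩
      · exact ⟨fun _ ↦ sub_le_self _ r.cast_nonneg, le_rfl⟩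
      · exact ⟨fun _ ↦ h, fun _ ↦ Nat.cast_le.2 h01.le⟩
  rw [hinter, sub_le_iff_le_add]
  change _ ↔ (f 1 : ℕ) - (f 0 : ℕ) ≤ r
  rw [tsub_le_iff_left]
  exact_mod_cast Iff.rfl

theorem exists_convexBody_isGapFamily (n r d : ℕ) :
    ∃ A : Fin n → ConvexBody (Fin (d + 1) → ℝ),
      IsGapFamily r d fun i ↦ (A i : Set (Fin (d + 1) → ℝ)) := by
  induction d with
  | zero =>
    exact ⟨fun i ↦ ⟨_, convex_Icc _ _, isCompact_Icc, nonempty_Icc.2 fun _ ↦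
      sub_le_self (i : ℝ) r.cast_nonneg⟩, isGapFamily_Icc n r⟩
  | succ d ih =>
    obtain ⟨B, hB⟩ := ih
    obtain ⟨A, hAB⟩ := exists_convexBody_isIntersectionLift B
    let φ := Fin.consEquivL ℝ fun _ : Fin (d + 2) ↦ ℝ
    exact ⟨fun i ↦ mapConvexBody φ.toContinuousLinearMap (A i),
      hB.of_isIntersectionLift (hAB.image φ.bijective)⟩

end GapFamily

/-- There are `n` convex sets `A_1, …, A_n` in ℝ^d such that a `(d+1)`-tuple
`A_{i_1}, …, A_{i_{d+1}}` (with `i_1 < ⋯ < i_{d+1}`) is intersecting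
iff `i_{d+1} - i_d ≤ r`. -/
theorem stmt7 (d n r : ℕ) (hd : 0 < d) (hn : 0 < n) (hr : 0 < r) (hdr : d + r ≤ n) :
    ∃ A : Fin n → Set (Fin d → ℝ),
      (∀ i, Convex ℝ (A i)) ∧
      ∀ f : Fin (d + 1) → Fin n, StrictMono f →
        ((⋂ j, A (f j)).Nonempty ↔
          (f (Fin.last d)).val - (f ⟨d - 1, by omega⟩).val ≤ r) := by
  obtain ⟨e, rfl⟩ := Nat.exists_eq_add_one.2 hd
  obtain ⟨A, hA⟩ := exists_convexBody_isGapFamily n r e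
  exact ⟨fun i ↦ A i, fun i ↦ (A i).convex, hA⟩
end

section
/- Let d, n, r be positive integers with n >= d + r. Let H be the (d+1)-uniform hypergraph on vertex set {1, 2, ..., n} whose edges are exactly the (d+1)-element subsets {a_1 < a_2 < ... < a_{d+1}} with a_{d+1} - a_d <= r. Then: (1) the maximal size of a clique of H (a vertex subset all of whose (d+1)-element subsets are edges) is d + r; and (2) the maximal size of an independent set of H (a vertex subset containing no edge of H) is d + floor((n-d)/(r+1)). -/
/-- `S` (a finite set of naturals with at least two elements) has its maximum `b`
within distance `r` of its second largest element. A `(d+1)`-set `{a_1 < ⋯ < a_{d+1}}`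
satisfies this iff `a_{d+1} - a_d ≤ r`. -/
def LastGapLe (r : ℕ) (S : Finset ℕ) : Prop :=
  ∃ b ∈ S, (∀ c ∈ S, c ≤ b) ∧ ∃ a ∈ S, a ≠ b ∧ b - a ≤ r

/-!
Whether a `(d+1)`-set is an edge depends only on its two largest elements `a < b`, and a pair
`a < b` in `W` consists of the two largest elements of some `(d+1)`-subset of `W` exactly when
`a` is not among the `d - 1` smallest elements of `W`. Let `T` be `W` without its `d - 1` smallest
elements. Then `W` is a clique iff the elements of `T` differ pairwise by at most `r`, so that `T`
fits into an interval of `r + 1` points, and `W` is independent iff they differ pairwise by at least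
`r + 1`, so that each block of `r + 1` consecutive points of `{d, …, n}` contains at most one of
them.
-/

open Finset

section LinearOrder

variable {α : Type*} [LinearOrder α] {S W : Finset α} {a b : α} {k : ℕ}

/-- The elements of `W` that are not among its `k` smallest, encoded as those with at least `k`
elements of `W` strictly below them. For `k = d - 1` this is the set `T` of the introduction. -/
def dropSmallest (k : ℕ) (W : Finset α) : Finset α :=
  {a ∈ W | k ≤ #{x ∈ W | x < a}}

theorem mem_dropSmallest : a ∈ dropSmallest k W ↔ a ∈ W ∧ k ≤ #{x ∈ W | x < a} :=
  mem_filter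

theorem dropSmallest_subset (k : ℕ) (W : Finset α) : dropSmallest k W ⊆ W :=
  filter_subset _ _

theorem strictMonoOn_card_filter_lt (W : Finset α) :
    StrictMonoOn (fun a ↦ #{x ∈ W | x < a}) (W : Set α) := by
  intro a ha b _ hab
  refine card_lt_card ((ssubset_iff_of_subset ?_).2 ⟨a, mem_filter.2 ⟨ha, hab⟩, by simp⟩)
  exact monotone_filter_right W fun _ _ hx ↦ hx.trans hab

theorem card_le_add_card_dropSmallest (k : ℕ) (W : Finset α) :
    #W ≤ k + #(dropSmallest k W) := by
  have hsmall : #{a ∈ W | ¬ k ≤ #{x ∈ W | x < a}} ≤ #(range k) :=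
    card_le_card_of_injOn (fun a ↦ #{x ∈ W | x < a})
      (fun a ha ↦ by simpa using (mem_filter.1 ha).2)
      ((strictMonoOn_card_filter_lt W).injOn.mono (coe_subset.2 (filter_subset _ _)))
  rw [card_range] at hsmall
  rw [← card_filter_add_card_filter_not (s := W) fun a ↦ k ≤ #{x ∈ W | x < a}, add_comm k]
  exact Nat.add_le_add_left hsmall _

/-- `a < b` are the two largest elements of `S`, the pair on which the edge relation depends. -/
structure IsTopPair (S : Finset α) (a b : α) : Prop where
  isGreatest : IsGreatest (S : Set α) b
  isGreatest_erase : IsGreatest (S.erase b : Set α) a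

namespace IsTopPair

theorem left_mem (h : IsTopPair S a b) : a ∈ S :=
  mem_of_mem_erase h.isGreatest_erase.1

theorem lt (h : IsTopPair S a b) : a < b :=
  (h.isGreatest.2 h.left_mem).lt_of_ne (ne_of_mem_erase h.isGreatest_erase.1)

theorem le_of_ne (h : IsTopPair S a b) {c : α} (hc : c ∈ S) (hcb : c ≠ b) : c ≤ a :=
  h.isGreatest_erase.2 (mem_erase.2 ⟨hcb, hc⟩)

theorem card_filter_lt (h : IsTopPair S a b) : #{x ∈ S | x < a} + 2 = #S := by
  have hbelow : {x ∈ S | x < a} = (S.erase b).erase a := by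
    ext x
    simp only [mem_filter, mem_erase]
    exact ⟨fun ⟨hx, hxa⟩ ↦ ⟨hxa.ne, (hxa.trans h.lt).ne, hx⟩,
      fun ⟨hxa, hxb, hx⟩ ↦ ⟨hx, (h.le_of_ne hx hxb).lt_of_ne hxa⟩⟩
  rw [hbelow, ← card_erase_add_one h.isGreatest.1, ← card_erase_add_one h.isGreatest_erase.1]

end IsTopPair

theorem exists_isTopPair (hS : 2 ≤ #S) : ∃ a b, IsTopPair S a b := by
  have hne : S.Nonempty := card_pos.1 (by omega)
  have hne' : (S.erase (S.max' hne)).Nonempty := by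
    rw [← card_pos, card_erase_of_mem (S.max'_mem hne)]
    omega
  exact ⟨_, _, S.isGreatest_max' hne, isGreatest_max' _ hne'⟩

theorem exists_isTopPair_subset_iff :
    (∃ S ⊆ W, #S = k + 2 ∧ IsTopPair S a b) ↔ a ∈ dropSmallest k W ∧ b ∈ W ∧ a < b := by
  constructor
  · rintro ⟨S, hSW, hcard, h⟩
    have hk : k = #{x ∈ S | x < a} := by have := h.card_filter_lt; omega
    refine ⟨mem_dropSmallest.2 ⟨hSW h.left_mem, ?_⟩, hSW h.isGreatest.1, h.lt⟩
    exact hk.trans_le (card_le_card (filter_subset_filter _ hSW))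
  · rintro ⟨ha, hb, hab⟩
    obtain ⟨haW, hk⟩ := mem_dropSmallest.1 ha
    obtain ⟨A, hA, rfl⟩ := exists_subset_card_eq hk
    have hAa : ∀ x ∈ A, x < a := fun x hx ↦ (mem_filter.1 (hA hx)).2
    have haA : a ∉ A := fun h ↦ (hAa a h).false
    have hbA : b ∉ insert a A := by
      simpa [hab.ne'] using fun h ↦ hab.not_gt (hAa b h)
    refine ⟨insert b (insert a A), ?_, ?_, ⟨by simp, ?_⟩, ?_⟩
    · exact insert_subset hb (insert_subset haW (hA.trans (filter_subset _ _)))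
    · rw [card_insert_of_notMem hbA, card_insert_of_notMem haA]
    · simpa [upperBounds, hab.le] using fun x hx ↦ ((hAa x hx).trans hab).le
    · rw [erase_insert hbA]
      exact ⟨by simp, by simpa [upperBounds] using fun x hx ↦ (hAa x hx).le⟩

end LinearOrder

/-- `W` is a clique of the `m`-uniform hypergraph whose edges are the `m`-sets satisfying `E`.
Independent sets are encoded as cliques of the complementary hypergraph `fun S ↦ ¬ E S`. -/
def IsUniformClique {α : Type*} (E : Finset α → Prop) (m : ℕ) (W : Finset α) : Prop :=
  ∀ S ⊆ W, #S = m → E S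

theorem isUniformClique_iff_of_isTopPair {α : Type*} [LinearOrder α] {E : Finset α → Prop}
    {p : α → α → Prop} (hE : ∀ S a b, IsTopPair S a b → (E S ↔ p a b)) {k : ℕ} {W : Finset α} :
    IsUniformClique E (k + 2) W ↔ ∀ a ∈ dropSmallest k W, ∀ b ∈ W, a < b → p a b := by
  constructor
  · intro hW a ha b hb hab
    obtain ⟨S, hSW, hcard, h⟩ := exists_isTopPair_subset_iff.2 ⟨ha, hb, hab⟩
    exact (hE S a b h).1 (hW S hSW hcard)
  · intro hW S hSW hcard
    obtain ⟨a, b, h⟩ := exists_isTopPair (hcard ▸ Nat.le_add_left 2 k)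
    obtain ⟨ha, hb, hab⟩ := exists_isTopPair_subset_iff.1 ⟨S, hSW, hcard, h⟩
    exact (hE S a b h).2 (hW a ha b hb hab)

section Nat

variable {T W : Finset ℕ} {a k m n r : ℕ}

theorem IsTopPair.lastGapLe_iff {S : Finset ℕ} {a b : ℕ} (h : IsTopPair S a b) :
    LastGapLe r S ↔ b ≤ a + r := by
  constructor
  · rintro ⟨b', hb', hmax, a', ha', hne, hgap⟩
    obtain rfl : b' = b := (h.isGreatest.2 hb').antisymm (hmax b h.isGreatest.1)
    have := h.le_of_ne ha' hne
    omega
  · exact fun hgap ↦ ⟨b, h.isGreatest.1, fun _ hc ↦ h.isGreatest.2 hc, a, h.left_mem, h.lt.ne,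
      Nat.sub_le_iff_le_add'.2 hgap⟩

theorem isUniformClique_lastGapLe_iff :
    IsUniformClique (LastGapLe r) (k + 2) W ↔
      ∀ a ∈ dropSmallest k W, ∀ b ∈ W, a < b → b ≤ a + r :=
  isUniformClique_iff_of_isTopPair fun _ _ _ h ↦ h.lastGapLe_iff

theorem isUniformClique_not_lastGapLe_iff :
    IsUniformClique (fun S ↦ ¬ LastGapLe r S) (k + 2) W ↔
      ∀ a ∈ dropSmallest k W, ∀ b ∈ W, a < b → a + r < b :=
  isUniformClique_iff_of_isTopPair fun _ _ _ h ↦ h.lastGapLe_iff.not.trans not_le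

theorem lt_of_mem_dropSmallest (hW : W ⊆ Icc 1 n) (ha : a ∈ dropSmallest k W) : k < a := by
  obtain ⟨haW, hk⟩ := mem_dropSmallest.1 ha
  have hbelow : {x ∈ W | x < a} ⊆ Ico 1 a := fun x hx ↦
    mem_Ico.2 ⟨(mem_Icc.1 (hW (mem_filter.1 hx).1)).1, (mem_filter.1 hx).2⟩
  have hcard := card_le_card hbelow
  have hpos := (mem_Icc.1 (hW haW)).1
  rw [Nat.card_Ico] at hcard
  omega

theorem card_le_of_forall_le_add (hT : ∀ a ∈ T, ∀ b ∈ T, a < b → b ≤ a + r) : #T ≤ r + 1 := by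
  obtain rfl | hne := T.eq_empty_or_nonempty
  · simp
  have hsub : T ⊆ Icc (T.min' hne) (T.min' hne + r) := fun b hb ↦ by
    have hmin := T.min'_le b hb
    have hgap := hT _ (T.min'_mem hne) b hb
    exact mem_Icc.2 ⟨hmin, by omega⟩
  have hcard := card_le_card hsub
  rw [Nat.card_Icc] at hcard
  omega

theorem card_le_of_forall_add_lt (hTm : T ⊆ Icc m n)
    (hT : ∀ a ∈ T, ∀ b ∈ T, a < b → a + r < b) : #T ≤ (n - m) / (r + 1) + 1 := by
  have hblock : StrictMonoOn (fun x ↦ (x - m) / (r + 1)) (T : Set ℕ) := by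
    intro a ha b hb hab
    have hma := (mem_Icc.1 (hTm ha)).1
    have hgap := hT a ha b hb hab
    calc (a - m) / (r + 1) < (a - m + (r + 1)) / (r + 1) := by simp
      _ ≤ (b - m) / (r + 1) := Nat.div_le_div_right (by omega)
  have hmaps : ∀ x ∈ T, (x - m) / (r + 1) ∈ range ((n - m) / (r + 1) + 1) := fun x hx ↦
    mem_range_succ_iff.2 <|
      Nat.div_le_div_right (Nat.sub_le_sub_right (mem_Icc.1 (hTm hx)).2 m)
  simpa using card_le_card_of_injOn _ hmaps hblock.injOn

theorem IsUniformClique.card_le_of_lastGapLe (hW : IsUniformClique (LastGapLe r) (k + 2) W) :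
    #W ≤ k + 1 + r := by
  have hT : #(dropSmallest k W) ≤ r + 1 := card_le_of_forall_le_add fun a ha b hb ↦
    isUniformClique_lastGapLe_iff.1 hW a ha b (dropSmallest_subset k W hb)
  have := card_le_add_card_dropSmallest k W
  omega

theorem IsUniformClique.card_le_of_not_lastGapLe (hWn : W ⊆ Icc 1 n)
    (hW : IsUniformClique (fun S ↦ ¬ LastGapLe r S) (k + 2) W) :
    #W ≤ k + 1 + (n - (k + 1)) / (r + 1) := by
  have hTn : dropSmallest k W ⊆ Icc (k + 1) n := fun a ha ↦
    mem_Icc.2 ⟨lt_of_mem_dropSmallest hWn ha,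
      (mem_Icc.1 (hWn (dropSmallest_subset k W ha))).2⟩
  have hT := card_le_of_forall_add_lt hTn fun a ha b hb ↦
    isUniformClique_not_lastGapLe_iff.1 hW a ha b (dropSmallest_subset k W hb)
  have := card_le_add_card_dropSmallest k W
  omega

theorem isUniformClique_lastGapLe_Icc (k r : ℕ) :
    IsUniformClique (LastGapLe r) (k + 2) (Icc 1 (k + 1 + r)) := by
  refine isUniformClique_lastGapLe_iff.2 fun a ha b hb _ ↦ ?_
  have hka := lt_of_mem_dropSmallest Subset.rfl ha
  have hbr := (mem_Icc.1 hb).2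
  omega

/-- The points `1, …, k` followed by the `q + 1` terms `k + 1, k + 1 + m, …, k + 1 + q * m` of an
arithmetic progression; for `m = r + 1` this is the extremal independent set. -/
def initialSegmentProgression (k m q : ℕ) : Finset ℕ :=
  Icc 1 k ∪ (range (q + 1)).image fun i ↦ k + 1 + i * m

theorem mem_initialSegmentProgression {q x : ℕ} :
    x ∈ initialSegmentProgression k m q ↔ x ∈ Icc 1 k ∨ ∃ i ≤ q, k + 1 + i * m = x := by
  simp only [initialSegmentProgression, mem_union, mem_image, mem_range_succ_iff]

theorem initialSegmentProgression_subset_Icc (k m q : ℕ) :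
    initialSegmentProgression k m q ⊆ Icc 1 (k + 1 + q * m) := by
  intro x hx
  rw [mem_Icc]
  obtain h | ⟨i, hi, rfl⟩ := mem_initialSegmentProgression.1 hx
  · rw [mem_Icc] at h
    omega
  · have := Nat.mul_le_mul_right m hi
    omega

theorem card_initialSegmentProgression (hm : 0 < m) (k q : ℕ) :
    #(initialSegmentProgression k m q) = k + 1 + q := by
  have hinj : Function.Injective fun i ↦ k + 1 + i * m :=
    (add_right_injective (k + 1)).comp (mul_left_injective₀ hm.ne')
  have hdisj : Disjoint (Icc 1 k) ((range (q + 1)).image fun i ↦ k + 1 + i * m) := by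
    simp only [disjoint_left, mem_Icc, mem_image]
    rintro _ ⟨-, hx⟩ ⟨i, -, rfl⟩
    omega
  rw [initialSegmentProgression, card_union_of_disjoint hdisj, card_image_of_injective _ hinj,
    Nat.card_Icc, card_range]
  omega

theorem isUniformClique_not_lastGapLe_initialSegmentProgression (k r q : ℕ) :
    IsUniformClique (fun S ↦ ¬ LastGapLe r S) (k + 2)
      (initialSegmentProgression k (r + 1) q) := by
  have hmod : ∀ x ∈ initialSegmentProgression k (r + 1) q, k < x → k + 1 ≡ x [MOD r + 1] := by
    intro x hx hkx
    obtain h | ⟨i, -, rfl⟩ := mem_initialSegmentProgression.1 hx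
    · exact absurd (mem_Icc.1 h).2 hkx.not_ge
    · simp [Nat.ModEq]
  refine isUniformClique_not_lastGapLe_iff.2 fun a ha b hb hab ↦ ?_
  have hka := lt_of_mem_dropSmallest (initialSegmentProgression_subset_Icc k (r + 1) q) ha
  have hab_mod : a ≡ b [MOD r + 1] :=
    (hmod a (dropSmallest_subset k _ ha) hka).symm.trans (hmod b hb (hka.trans hab))
  exact hab_mod.add_le_of_lt hab

end Nat

/-- For the `(d+1)`-uniform hypergraph on `{1,…,n}` whose edges are the `(d+1)`-sets
`{a_1 < ⋯ < a_{d+1}}` with `a_{d+1} - a_d ≤ r`: the maximal clique size is `d + r`,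
and the maximal independent set size is `d + ⌊(n-d)/(r+1)⌋`. -/
theorem stmt9 (d n r : ℕ) (hd : 0 < d) (hr : 0 < r) (hn : d + r ≤ n) :
    (∃ W : Finset ℕ, W ⊆ Finset.Icc 1 n ∧ W.card = d + r ∧
      ∀ S ⊆ W, S.card = d + 1 → LastGapLe r S) ∧
    (∀ W : Finset ℕ, W ⊆ Finset.Icc 1 n →
      (∀ S ⊆ W, S.card = d + 1 → LastGapLe r S) → W.card ≤ d + r) ∧
    (∃ W : Finset ℕ, W ⊆ Finset.Icc 1 n ∧ W.card = d + (n - d) / (r + 1) ∧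
      ∀ S ⊆ W, S.card = d + 1 → ¬ LastGapLe r S) ∧
    (∀ W : Finset ℕ, W ⊆ Finset.Icc 1 n →
      (∀ S ⊆ W, S.card = d + 1 → ¬ LastGapLe r S) → W.card ≤ d + (n - d) / (r + 1)) := by
  obtain ⟨k, rfl⟩ := Nat.exists_eq_add_one.2 hd
  have hq : (n - (k + 1)) / (r + 1) * (r + 1) ≤ n - (k + 1) := Nat.div_mul_le_self _ _
  refine ⟨⟨Icc 1 (k + 1 + r), Icc_subset_Icc_right hn, by simp,
      isUniformClique_lastGapLe_Icc k r⟩,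
    fun _ _ hW ↦ IsUniformClique.card_le_of_lastGapLe hW,
    ⟨initialSegmentProgression k (r + 1) ((n - (k + 1)) / (r + 1)), ?_,
      card_initialSegmentProgression r.succ_pos k _,
      isUniformClique_not_lastGapLe_initialSegmentProgression k r _⟩,
    fun _ hWn hW ↦ IsUniformClique.card_le_of_not_lastGapLe hWn hW⟩
  exact (initialSegmentProgression_subset_Icc _ _ _).trans (Icc_subset_Icc_right (by omega))
end

section
/- Let m and n be positive integers with m <= n, and write n = m*q + s with 0 <= s < m. Then there exists a family F of n sets in R^m, each of the form B_1 x B_2 x ... x B_m with every B_i a convex subset of R, such that every intersecting subfamily of F has size at most m and the number of intersecting pairs of members of F is exactly C(n,2) - s * C(ceil(n/m), 2) - (m - s) * C(floor(n/m), 2). -/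
/-!
Give the `i`-th set the colour `k = i mod m` and let it be the hyperplane `{x | x k = v i}`, where
the values `v i` are distinct. A point has only one `k`-th coordinate, so two sets of the same
colour are disjoint, whereas sets of distinct colours constrain distinct coordinates and have a
common point. Hence an intersecting subfamily has at most one set of each colour, and the disjoint
pairs are the pairs inside a colour class: the intersection graph is the Turán graph.
-/

section CoordHyperplane

variable {ι κ E : Type*}

/-- The coordinate hyperplane `x k = a` in `κ → E`, as a box with one factor `{a}` and all other
factors `E`. The sets of the extremal family have this form; `E` need not be a field. -/
def coordHyperplane (k : κ) (a : E) : Set (κ → E) :=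
  {x | x k = a}

theorem exists_convex_coordHyperplane_eq (𝕜 : Type*) [Semiring 𝕜] [PartialOrder 𝕜]
    [AddCommMonoid E] [Module 𝕜 E] (k : κ) (a : E) :
    ∃ B : κ → Set E, (∀ j, Convex 𝕜 (B j)) ∧ coordHyperplane k a = {x | ∀ j, x j ∈ B j} := by
  classical
  refine ⟨Function.update (fun _ => Set.univ) k {a}, ?_, ?_⟩
  · rw [Function.forall_update_iff _ fun _ => Convex 𝕜]
    exact ⟨convex_singleton a, fun _ _ => convex_univ⟩
  · ext x
    rw [Set.mem_ofPred_eq, Function.forall_update_iff _ fun j (B : Set E) => x j ∈ B]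
    simp [coordHyperplane]

theorem iInter_coordHyperplane_nonempty_iff [Nonempty E] (f : ι → κ) (v : ι → E) :
    (⋂ i, coordHyperplane (f i) (v i)).Nonempty ↔ v.FactorsThrough f := by
  simp only [Function.factorsThrough_iff, Set.Nonempty, Set.mem_iInter, coordHyperplane,
    Set.mem_ofPred_eq, funext_iff, Function.comp_apply, eq_comm]

theorem biInter_coordHyperplane_nonempty_iff_injOn [Nonempty E] (f : ι → κ) {v : ι → E}
    (hv : Function.Injective v) (S : Set ι) :
    (⋂ i ∈ S, coordHyperplane (f i) (v i)).Nonempty ↔ S.InjOn f := by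
  rw [Set.biInter_eq_iInter, iInter_coordHyperplane_nonempty_iff (fun i : S => f i),
    Set.injOn_iff_injective]
  exact ⟨fun h _ _ hab => Subtype.ext (hv (h hab)), fun h => h.factorsThrough _⟩

end CoordHyperplane

section Monochromatic

open Finset

variable {α β : Type*} [DecidableEq β] (f : α → β) (s : Finset α)

theorem card_filter_monochromatic_powersetCard {k : ℕ} (hk : k ≠ 0) (t : Finset β) :
    #{S ∈ s.powersetCard k | ∃ b ∈ t, ∀ a ∈ S, f a = b} =
      ∑ b ∈ t, (#{a ∈ s | f a = b}).choose k := by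
  classical
  have hunion : {S ∈ s.powersetCard k | ∃ b ∈ t, ∀ a ∈ S, f a = b} =
      t.biUnion fun b => powersetCard k {a ∈ s | f a = b} := by
    ext S
    simp only [mem_filter, mem_powersetCard, mem_biUnion, subset_iff, forall_and]
    tauto
  have hdisj : (t : Set β).PairwiseDisjoint fun b => powersetCard k {a ∈ s | f a = b} := by
    refine fun b _ c _ hbc => disjoint_left.mpr fun S hSb hSc => hbc ?_
    simp only [mem_powersetCard, subset_iff, mem_filter] at hSb hSc
    obtain ⟨a, ha⟩ : S.Nonempty := card_ne_zero.mp (hSb.2.trans_ne hk)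
    exact (hSb.1 ha).2.symm.trans (hSc.1 ha).2
  rw [hunion, card_biUnion hdisj]
  simp only [card_powersetCard]

open scoped Classical in
theorem card_filter_injOn_powersetCard_two {t : Finset β} (hf : Set.MapsTo f s t) :
    #((s.powersetCard 2).filter fun S : Finset α => Set.InjOn f S) =
      (#s).choose 2 - ∑ b ∈ t, (#{a ∈ s | f a = b}).choose 2 := by
  have hmono : ((s.powersetCard 2).filter fun S : Finset α => ¬ Set.InjOn f S) =
      {S ∈ s.powersetCard 2 | ∃ b ∈ t, ∀ a ∈ S, f a = b} := by
    refine filter_congr fun S hS => ?_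
    obtain ⟨hSs, hcard⟩ := mem_powersetCard.mp hS
    obtain ⟨x, y, hxy, rfl⟩ := card_eq_two.mp hcard
    have hx : f x ∈ t := hf (hSs (mem_insert_self x _))
    simp only [coe_pair, Set.injOn_pair, hxy, imp_false, not_not, mem_insert, mem_singleton,
      forall_eq_or_imp, forall_eq]
    exact ⟨fun h => ⟨f x, hx, rfl, h.symm⟩, fun ⟨_, _, hxb, hyb⟩ => hxb.trans hyb.symm⟩
  rw [← card_filter_monochromatic_powersetCard f s two_ne_zero, ← hmono, ← card_powersetCard,
    ← card_filter_add_card_filter_not (s := s.powersetCard 2) fun S => Set.InjOn f S,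
    Nat.add_sub_cancel_right]

end Monochromatic

section Residues

open Finset

theorem add_sub_one_div_of_mod_ne_zero {m n : ℕ} (hm : 0 < m) (hn : n % m ≠ 0) :
    (n + m - 1) / m = n / m + 1 := by
  have hsplit : n + m - 1 = n % m - 1 + m * (n / m + 1) := by
    have := Nat.mod_add_div n m
    rw [mul_add]
    omega
  rw [hsplit, Nat.add_mul_div_left _ _ hm,
    Nat.div_eq_of_lt ((Nat.sub_le _ _).trans_lt (Nat.mod_lt n hm)), zero_add]

theorem card_filter_fin_ofNat_eq {m : ℕ} [NeZero m] (n : ℕ) (j : Fin m) :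
    #{i : Fin n | Fin.ofNat m i = j} = if (j : ℕ) < n % m then (n + m - 1) / m else n / m := by
  have hm : 0 < m := NeZero.pos m
  have hcount : #{i : Fin n | Fin.ofNat m i = j} = n.count (· ≡ j [MOD m]) := by
    rw [Nat.count_eq_card_filter_range, ← card_map Fin.valEmbedding]
    congr 1
    ext a
    simp [Fin.exists_iff, Fin.ext_iff, Nat.ModEq, Nat.mod_eq_of_lt j.isLt, and_comm]
  rw [hcount, Nat.count_modEq_card n hm, Nat.mod_eq_of_lt j.isLt]
  split_ifs with hj
  · rw [add_sub_one_div_of_mod_ne_zero hm (Nat.ne_zero_of_lt hj)]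
  · rfl

theorem sum_fin_ite_val_lt {M : Type*} [AddCommMonoid M] {m r : ℕ} (hr : r ≤ m) (a b : M) :
    ∑ j : Fin m, (if (j : ℕ) < r then a else b) = r • a + (m - r) • b := by
  have hlt : #{j : Fin m | (j : ℕ) < r} = r := by rw [Fin.card_filter_val_lt, min_eq_right hr]
  have hge : #{j : Fin m | ¬ (j : ℕ) < r} = m - r := by
    rw [filter_not, card_sdiff_of_subset (filter_subset _ _), card_fin, hlt]
  rw [sum_ite, sum_const, sum_const, hlt, hge]

theorem sum_apply_card_filter_fin_ofNat_eq {M : Type*} [AddCommMonoid M] (m n : ℕ) [NeZero m]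
    (g : ℕ → M) :
    ∑ j : Fin m, g #{i : Fin n | Fin.ofNat m i = j} =
      (n % m) • g ((n + m - 1) / m) + (m - n % m) • g (n / m) := by
  simp only [card_filter_fin_ofNat_eq, apply_ite g]
  exact sum_fin_ite_val_lt (Nat.mod_lt n (NeZero.pos m)).le _ _

end Residues

open scoped Classical in
theorem stmt11_general (𝕜 E : Type*) [Semiring 𝕜] [PartialOrder 𝕜] [AddCommMonoid E] [Module 𝕜 E]
    [Infinite E] (m n : ℕ) (hm : 0 < m) :
    ∃ F : Fin n → Set (Fin m → E),
      (∀ i, ∃ B : Fin m → Set E, (∀ j, Convex 𝕜 (B j)) ∧ F i = {x | ∀ j, x j ∈ B j}) ∧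
      (∀ S : Finset (Fin n), (⋂ i ∈ S, F i).Nonempty → S.card ≤ m) ∧
      ((Finset.powersetCard 2 (Finset.univ : Finset (Fin n))).filter
          (fun S : Finset (Fin n) => (⋂ i ∈ S, F i).Nonempty)).card
        = n.choose 2 - (n % m) * ((n + m - 1) / m).choose 2
          - (m - n % m) * (n / m).choose 2 := by
  have : NeZero m := ⟨hm.ne'⟩
  let colour : Fin n → Fin m := fun i => Fin.ofNat m i
  let v : Fin n ↪ E := Fin.valEmbedding.trans (Infinite.natEmbedding E)
  have hmeet (S : Finset (Fin n)) :
      (⋂ i ∈ S, coordHyperplane (colour i) (v i)).Nonempty ↔ Set.InjOn colour S :=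
    biInter_coordHyperplane_nonempty_iff_injOn colour v.injective S
  refine ⟨fun i => coordHyperplane (colour i) (v i),
    fun i => exists_convex_coordHyperplane_eq 𝕜 (colour i) (v i), fun S hS => ?_, ?_⟩
  · simpa using Finset.card_le_card_of_injOn colour (t := Finset.univ) (by simp) ((hmeet S).mp hS)
  · simp only [hmeet]
    rw [card_filter_injOn_powersetCard_two colour Finset.univ (t := Finset.univ) (by simp),
      sum_apply_card_filter_fin_ofNat_eq m n (Nat.choose · 2), Finset.card_fin, smul_eq_mul,
      smul_eq_mul, Nat.sub_sub]

open scoped Classical in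
/-- Sharpness of Turán-type bound for intersections of boxes (products of
convex subsets of ℝ) in ℝ^m. -/
theorem stmt11 (m n q s : ℕ) (hm : 0 < m) (hn : 0 < n) (hmn : m ≤ n)
    (hqs : n = m * q + s) (hs : s < m) :
    ∃ F : Fin n → Set (Fin m → ℝ),
      (∀ i, ∃ B : Fin m → Set ℝ, (∀ j, Convex ℝ (B j)) ∧ F i = {x | ∀ j, x j ∈ B j}) ∧
      (∀ S : Finset (Fin n), (⋂ i ∈ S, F i).Nonempty → S.card ≤ m) ∧
      ((Finset.powersetCard 2 (Finset.univ : Finset (Fin n))).filter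
          (fun S : Finset (Fin n) => (⋂ i ∈ S, F i).Nonempty)).card
        = n.choose 2 - s * ((n + m - 1) / m).choose 2 - (m - s) * (n / m).choose 2 := by
  obtain rfl : n % m = s := by rw [hqs, Nat.mul_add_mod, Nat.mod_eq_of_lt hs]
  exact stmt11_general ℝ ℝ m n hm
end

section
/- For every integer t >= 2 and real c > 0 there exists a real c' > 0 such that the following holds for every n: if G is a simple graph on n vertices that contains at least c * n^t cliques of size t and contains no induced subgraph isomorphic to K_t^{(2)}, then G contains a clique of size at least c' * n. -/
/-!
Induct on `t`, in a set `A` of at most `n` vertices, the case `t = 0` being vacuous. If `K_{t+1}`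
has density `c` in `A`, then linearly many vertices, forming a set `B`, have a neighbourhood
containing at least `c / 2 * n ^ t` copies of `K_t`. Either some nonadjacent `x, y ∈ A` have a
positive density of `K_t` in their common neighbourhood, which contains no induced blowup of `K_t`,
and the induction hypothesis applies there; or, by Bonferroni's inequality, the independent sets in
`B` have bounded size. In the second case a nonadjacent pair `x, y` splits `B` into the common
neighbourhood, where `t` drops, and the non-neighbours of `x` and of `y`, where the independence
number drops. Passing to the largest of the three parts a bounded number of times ends in a clique,
of linear size.
-/

section

open Finset SimpleGraph

theorem sum_card_le_card_biUnion_add_sq_mul {α β : Type*} [DecidableEq β] {S : Finset α}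
    {F : α → Finset β} {e : ℝ} (he : 0 ≤ e)
    (hF : (S : Set α).Pairwise fun x y => (#(F x ∩ F y) : ℝ) ≤ e) :
    ∑ x ∈ S, (#(F x) : ℝ) ≤ #(S.biUnion F) + (#S : ℝ) ^ 2 * e := by
  classical
  induction S using Finset.induction_on with
  | empty => simp
  | insert a S ha ih =>
    have hinter : (#(F a ∩ S.biUnion F) : ℝ) ≤ #S * e := by
      rw [inter_biUnion, ← nsmul_eq_mul]
      calc (#(S.biUnion fun x => F a ∩ F x) : ℝ) ≤ ∑ x ∈ S, (#(F a ∩ F x) : ℝ) := by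
            exact_mod_cast card_biUnion_le
        _ ≤ #S • e := sum_le_card_nsmul _ _ _ fun x hx =>
            hF (mem_insert_self a S) (mem_insert_of_mem hx) (ne_of_mem_of_not_mem hx ha).symm
    have hunion : (#(F a ∪ S.biUnion F) : ℝ) + #(F a ∩ S.biUnion F) =
        #(F a) + #(S.biUnion F) := by
      exact_mod_cast card_union_add_card_inter _ _
    have ih := ih (hF.mono (coe_subset.2 (subset_insert a S)))
    rw [sum_insert ha, biUnion_insert, card_insert_of_notMem ha]
    push_cast
    nlinarith [mul_nonneg (Nat.cast_nonneg (α := ℝ) #S) he]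

theorem sum_le_card_filter_le_mul_add {α : Type*} {S : Finset α} {f : α → ℝ} {a M : ℝ}
    (ha : 0 ≤ a) (hf : ∀ x ∈ S, f x ≤ M) :
    ∑ x ∈ S, f x ≤ #{x ∈ S | a ≤ f x} * M + #S * a := by
  rw [← sum_filter_add_sum_filter_not S (a ≤ f ·)]
  have hlarge : ∑ x ∈ S with a ≤ f x, f x ≤ #{x ∈ S | a ≤ f x} * M := by
    rw [← nsmul_eq_mul]
    exact sum_le_card_nsmul _ _ _ fun x hx => hf x (filter_subset _ _ hx)
  have hsmall : ∑ x ∈ S with ¬ a ≤ f x, f x ≤ #S * a :=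
    calc ∑ x ∈ S with ¬ a ≤ f x, f x ≤ #{x ∈ S | ¬ a ≤ f x} • a :=
          sum_le_card_nsmul _ _ _ fun x hx => (not_le.1 (mem_filter.1 hx).2).le
      _ = #{x ∈ S | ¬ a ≤ f x} * a := nsmul_eq_mul _ _
      _ ≤ #S * a := by gcongr; exact filter_subset _ _
  exact add_le_add hlarge hsmall

variable {V : Type*}

/-- `A` contains an induced 2-blowup of `K_t`: `f (i, 0)` and `f (i, 1)` are the two copies of the
`i`-th vertex of `K_t`. -/
def HasInducedBlowup (G : SimpleGraph V) (t : ℕ) (A : Finset V) : Prop :=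
  ∃ f : Fin t × Fin 2 → V, Function.Injective f ∧ (∀ u, f u ∈ A) ∧
    ∀ u v, G.Adj (f u) (f v) ↔ u.1 ≠ v.1

/-- The neighbourhood of `x` in the subgraph induced on `A`; the vertex `x` itself need not lie
in `A`. -/
def neighborsIn (G : SimpleGraph V) [DecidableRel G.Adj] (A : Finset V) (x : V) : Finset V :=
  {v ∈ A | G.Adj x v}

/-- The copies of `K_t` in the subgraph induced on `A`, each given by its vertex set. -/
def cliquesIn [DecidableEq V] (G : SimpleGraph V) [DecidableRel G.Adj] (t : ℕ) (A : Finset V) :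
    Finset (Finset V) :=
  {S ∈ A.powersetCard t | G.IsClique (S : Set V)}

section Blowup

variable {G : SimpleGraph V} {t : ℕ} {A B : Finset V} {x y : V}

theorem hasInducedBlowup_zero : HasInducedBlowup G 0 A :=
  ⟨fun u => u.1.elim0, fun u => u.1.elim0, fun u => u.1.elim0, fun u => u.1.elim0⟩

theorem HasInducedBlowup.mono (hAB : A ⊆ B) (h : HasInducedBlowup G t A) :
    HasInducedBlowup G t B := by
  obtain ⟨f, hinj, hmem, hf⟩ := h
  exact ⟨f, hinj, fun u => hAB (hmem u), hf⟩

theorem injective_of_adj_of_fst_ne {f : Fin t × Fin 2 → V}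
    (hf : ∀ u v, u.1 ≠ v.1 → G.Adj (f u) (f v)) (hne : ∀ i, f (i, 0) ≠ f (i, 1)) :
    Function.Injective f := by
  rintro ⟨i, a⟩ ⟨j, b⟩ h
  obtain rfl : i = j := by
    by_contra hij
    exact G.ne_of_adj (hf (i, a) (j, b) hij) h
  fin_cases a <;> fin_cases b
  exacts [rfl, absurd h (hne i), absurd h.symm (hne i), rfl]

variable [DecidableRel G.Adj]

theorem mem_neighborsIn {v : V} : v ∈ neighborsIn G A x ↔ v ∈ A ∧ G.Adj x v :=
  mem_filter

theorem neighborsIn_subset : neighborsIn G A x ⊆ A :=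
  filter_subset _ _

variable [DecidableEq V]

theorem HasInducedBlowup.succ (hx : x ∈ A) (hy : y ∈ A) (hxy : x ≠ y) (hadj : ¬ G.Adj x y)
    (h : HasInducedBlowup G t (neighborsIn G A x ∩ neighborsIn G A y)) :
    HasInducedBlowup G (t + 1) A := by
  obtain ⟨g, hinj, hmem, hg⟩ := h
  simp only [mem_inter, mem_neighborsIn] at hmem
  let f : Fin (t + 1) × Fin 2 → V := fun u =>
    Fin.cons (α := fun _ => Fin 2 → V) ![x, y] (fun i b => g (i, b)) u.1 u.2
  have hpair (b : Fin 2) (u : Fin t × Fin 2) : G.Adj (![x, y] b) (g u) := by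
    fin_cases b
    exacts [(hmem u).1.2, (hmem u).2.2]
  have hf (u v : Fin (t + 1) × Fin 2) : G.Adj (f u) (f v) ↔ u.1 ≠ v.1 := by
    obtain ⟨i, a⟩ := u
    obtain ⟨j, b⟩ := v
    cases i using Fin.cases with
    | zero =>
      cases j using Fin.cases with
      | zero => fin_cases a <;> fin_cases b <;> simp [f, hadj, mt G.adj_symm hadj]
      | succ j => simpa [f, (Fin.succ_ne_zero j).symm] using hpair a (j, b)
    | succ i =>
      cases j using Fin.cases with
      | zero => simpa [f] using (hpair b (i, a)).symm
      | succ j => simpa [f] using hg (i, a) (j, b)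
  refine ⟨f, injective_of_adj_of_fst_ne (fun u v => (hf u v).2) fun i => ?_, fun u => ?_, hf⟩
  · cases i using Fin.cases with
    | zero => simpa [f] using hxy
    | succ i => simp [f, hinj.eq_iff]
  · obtain ⟨i, b⟩ := u
    cases i using Fin.cases with
    | zero => fin_cases b <;> simpa [f]
    | succ i => exact (hmem (i, b)).1.1

end Blowup

section IndepSetFree

variable {G : SimpleGraph V} {t m : ℕ} {A : Finset V} {x y : V}

theorem indepSetFreeOn_neighborsIn_compl [DecidableEq V] [DecidableRel G.Adj]
    (hA : G.IndepSetFreeOn A (m + 1)) (hx : x ∈ A) :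
    G.IndepSetFreeOn (neighborsIn Gᶜ A x) m := by
  intro T hT hindep
  have hfree : Gᶜ.CliqueFreeOn A (m + 1) :=
    fun S hS hclique => hA hS ((isNClique_compl G).1 hclique)
  exact hfree.of_succ Gᶜ hx (fun v hv => mem_neighborsIn.1 (hT hv)) ((isNClique_compl G).2 hindep)

theorem subset_inter_neighborsIn_union_neighborsIn_compl [DecidableEq V] [DecidableRel G.Adj]
    (hxy : x ≠ y) (hadj : ¬ G.Adj x y) :
    A ⊆ (neighborsIn G A x ∩ neighborsIn G A y) ∪ (neighborsIn Gᶜ A x ∪ neighborsIn Gᶜ A y) := by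
  intro v hv
  simp only [mem_union, mem_inter, mem_neighborsIn, compl_adj]
  grind [G.adj_comm x y]

theorem card_le_three_mul_card_inter_neighborsIn_or_neighborsIn_compl [DecidableEq V]
    [DecidableRel G.Adj] (hxy : x ≠ y) (hadj : ¬ G.Adj x y) :
    #A ≤ 3 * #(neighborsIn G A x ∩ neighborsIn G A y) ∨
      #A ≤ 3 * #(neighborsIn Gᶜ A x) ∨ #A ≤ 3 * #(neighborsIn Gᶜ A y) := by
  have hsplit : #A ≤ #(neighborsIn G A x ∩ neighborsIn G A y) +
      (#(neighborsIn Gᶜ A x) + #(neighborsIn Gᶜ A y)) := by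
    grw [← card_union_le, ← card_union_le]
    exact card_le_card (subset_inter_neighborsIn_union_neighborsIn_compl hxy hadj)
  omega

theorem exists_isClique_card_le_mul_of_indepSetFreeOn
    (hindep : G.IndepSetFreeOn A m) (hblowup : ¬ HasInducedBlowup G t A) :
    ∃ K ⊆ A, G.IsClique (K : Set V) ∧ #A ≤ 3 ^ (t + m) * #K := by
  classical
  induction t generalizing m A with
  | zero => exact absurd hasInducedBlowup_zero hblowup
  | succ t iht =>
    induction m generalizing A with
    | zero => exact absurd (show G.IsNIndepSet 0 ∅ by simp [isNIndepSet_iff]) (hindep (by simp))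
    | succ m ihm =>
      by_cases hA : G.IsClique (A : Set V)
      · exact ⟨A, Subset.rfl, hA, Nat.le_mul_of_pos_left _ (by positivity)⟩
      obtain ⟨x, hx, y, hy, hxy, hadj⟩ : ∃ x ∈ A, ∃ y ∈ A, x ≠ y ∧ ¬ G.Adj x y := by
        simpa [IsClique, Set.Pairwise] using hA
      have hcommon : ∃ K ⊆ neighborsIn G A x ∩ neighborsIn G A y, G.IsClique (K : Set V) ∧
          #(neighborsIn G A x ∩ neighborsIn G A y) ≤ 3 ^ (t + (m + 1)) * #K :=
        iht (fun T hT => hindep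
          (hT.trans (coe_subset.2 (inter_subset_left.trans neighborsIn_subset))))
          fun h => hblowup (h.succ hx hy hxy hadj)
      have hcompl (z : V) (hz : z ∈ A) : ∃ K ⊆ neighborsIn Gᶜ A z, G.IsClique (K : Set V) ∧
          #(neighborsIn Gᶜ A z) ≤ 3 ^ (t + 1 + m) * #K :=
        ihm (indepSetFreeOn_neighborsIn_compl hindep hz)
          fun h => hblowup (h.mono neighborsIn_subset)
      have hpart {P : Finset V} (hPA : P ⊆ A) (hP : #A ≤ 3 * #P)
          (h : ∃ K ⊆ P, G.IsClique (K : Set V) ∧ #P ≤ 3 ^ (t + 1 + m) * #K) :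
          ∃ K ⊆ A, G.IsClique (K : Set V) ∧ #A ≤ 3 ^ (t + 1 + (m + 1)) * #K := by
        obtain ⟨K, hKP, hK, hcard⟩ := h
        refine ⟨K, hKP.trans hPA, hK, hP.trans ?_⟩
        rw [← add_assoc, pow_succ', mul_assoc]
        exact Nat.mul_le_mul_left 3 hcard
      obtain hlarge | hlarge | hlarge :=
        card_le_three_mul_card_inter_neighborsIn_or_neighborsIn_compl (A := A) hxy hadj
      · refine hpart (inter_subset_left.trans neighborsIn_subset) hlarge ?_
        rwa [add_right_comm, add_assoc]
      · exact hpart neighborsIn_subset hlarge (hcompl x hx)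
      · exact hpart neighborsIn_subset hlarge (hcompl y hy)

end IndepSetFree

section CliqueCount

variable {G : SimpleGraph V} [DecidableEq V] [DecidableRel G.Adj] {t n : ℕ} {A B : Finset V}

theorem mem_cliquesIn {S : Finset V} :
    S ∈ cliquesIn G t A ↔ (S ⊆ A ∧ #S = t) ∧ G.IsClique (S : Set V) := by
  rw [cliquesIn, mem_filter, mem_powersetCard]

theorem cliquesIn_mono (hAB : A ⊆ B) : cliquesIn G t A ⊆ cliquesIn G t B :=
  filter_subset_filter _ (powersetCard_mono hAB)

theorem cliquesIn_inter : cliquesIn G t (A ∩ B) = cliquesIn G t A ∩ cliquesIn G t B := by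
  ext S
  simp only [mem_inter, mem_cliquesIn, subset_inter_iff]
  tauto

theorem card_cliquesIn_le_pow (hA : #A ≤ n) : #(cliquesIn G t A) ≤ n ^ t :=
  calc #(cliquesIn G t A) ≤ #(A.powersetCard t) := card_filter_le _ _
    _ = (#A).choose t := card_powersetCard _ _
    _ ≤ #A ^ t := Nat.choose_le_pow _ _
    _ ≤ n ^ t := Nat.pow_le_pow_left hA t

theorem cliquesIn_succ_subset_biUnion :
    cliquesIn G (t + 1) A ⊆
      A.biUnion fun x => (cliquesIn G t (neighborsIn G A x)).image (insert x) := by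
  intro S hS
  obtain ⟨⟨hSA, hcard⟩, hclique⟩ := mem_cliquesIn.1 hS
  obtain ⟨x, hx⟩ : S.Nonempty := card_pos.1 (by omega)
  refine mem_biUnion.2 ⟨x, hSA hx, mem_image.2 ⟨S.erase x, mem_cliquesIn.2 ⟨⟨?_, ?_⟩, ?_⟩,
    insert_erase hx⟩⟩
  · intro v hv
    obtain ⟨hvx, hvS⟩ := mem_erase.1 hv
    exact mem_neighborsIn.2 ⟨hSA hvS, hclique hx hvS hvx.symm⟩
  · rw [card_erase_of_mem hx, hcard, Nat.add_sub_cancel]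
  · exact hclique.subset (coe_subset.2 (erase_subset x S))

theorem card_cliquesIn_succ_le_sum :
    #(cliquesIn G (t + 1) A) ≤ ∑ x ∈ A, #(cliquesIn G t (neighborsIn G A x)) :=
  (card_le_card cliquesIn_succ_subset_biUnion).trans <| card_biUnion_le.trans <|
    sum_le_sum fun _ _ => card_image_le

theorem mul_le_card_filter_le_card_cliquesIn {c : ℝ} (hc : 0 ≤ c) (hA : #A ≤ n)
    (h : c * (n : ℝ) ^ (t + 1) ≤ #(cliquesIn G (t + 1) A)) :
    c / 2 * n ≤ #{x ∈ A | c / 2 * (n : ℝ) ^ t ≤ #(cliquesIn G t (neighborsIn G A x))} := by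
  rcases n.eq_zero_or_pos with rfl | hn
  · simp
  have hsum : (#(cliquesIn G (t + 1) A) : ℝ) ≤
      ∑ x ∈ A, (#(cliquesIn G t (neighborsIn G A x)) : ℝ) := by
    exact_mod_cast card_cliquesIn_succ_le_sum
  have hdeg : ∀ x ∈ A, (#(cliquesIn G t (neighborsIn G A x)) : ℝ) ≤ (n : ℝ) ^ t := fun x _ => by
    exact_mod_cast card_cliquesIn_le_pow ((card_le_card neighborsIn_subset).trans hA)
  have hmarkov := sum_le_card_filter_le_mul_add (a := c / 2 * (n : ℝ) ^ t) (by positivity) hdeg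
  have hsmall : #A * (c / 2 * (n : ℝ) ^ t) ≤ n * (c / 2 * (n : ℝ) ^ t) := by gcongr
  rw [pow_succ] at h
  refine le_of_mul_le_mul_right ?_ (show (0 : ℝ) < (n : ℝ) ^ t by positivity)
  linarith

theorem indepSetFreeOn_of_card_cliquesIn_inter_le {m : ℕ} {d e : ℝ} (he : 0 ≤ e)
    (hdeg : ∀ x ∈ B, d ≤ #(cliquesIn G t (neighborsIn G A x)))
    (hcodeg : ∀ x ∈ B, ∀ y ∈ B, x ≠ y → ¬ G.Adj x y →
      (#(cliquesIn G t (neighborsIn G A x ∩ neighborsIn G A y)) : ℝ) ≤ e)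
    (hlt : #(cliquesIn G t A) + (m : ℝ) ^ 2 * e < m * d) : G.IndepSetFreeOn B m := by
  rintro S hSB ⟨hindep, rfl⟩
  let F : V → Finset (Finset V) := fun x => cliquesIn G t (neighborsIn G A x)
  have hinter : (S : Set V).Pairwise fun x y => (#(F x ∩ F y) : ℝ) ≤ e := fun x hx y hy hxy => by
    simpa only [F, ← cliquesIn_inter] using
      hcodeg x (hSB hx) y (hSB hy) hxy (hindep hx hy hxy)
  have hlower : #S * d ≤ ∑ x ∈ S, (#(F x) : ℝ) := by
    rw [← nsmul_eq_mul]
    exact card_nsmul_le_sum _ _ _ fun x hx => hdeg x (hSB hx)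
  have hunion : (#(S.biUnion F) : ℝ) ≤ #(cliquesIn G t A) := by
    exact_mod_cast card_le_card (biUnion_subset.2 fun x _ => cliquesIn_mono neighborsIn_subset)
  linarith [sum_card_le_card_biUnion_add_sq_mul he hinter]

theorem exists_le_card_cliquesIn_inter_or_exists_isClique {m : ℕ} {c : ℝ}
    (hm : 4 < c * m) (hA : #A ≤ n)
    (hcount : c * (n : ℝ) ^ (t + 1) ≤ #(cliquesIn G (t + 1) A))
    (hblowup : ¬ HasInducedBlowup G (t + 1) A) :
    (∃ x ∈ A, ∃ y ∈ A, x ≠ y ∧ ¬ G.Adj x y ∧ 1 / (2 * (m : ℝ) ^ 2) * (n : ℝ) ^ t ≤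
      #(cliquesIn G t (neighborsIn G A x ∩ neighborsIn G A y))) ∨
    ∃ K ⊆ A, G.IsClique (K : Set V) ∧ c / 2 * n ≤ 3 ^ (t + 1 + m) * #K := by
  have hc : 0 < c := pos_of_mul_pos_left (four_pos.trans hm) (Nat.cast_nonneg m)
  rcases n.eq_zero_or_pos with rfl | hn
  · exact .inr ⟨∅, by simp⟩
  refine or_iff_not_imp_left.2 fun hfew => ?_
  push Not at hfew
  let B : Finset V := {x ∈ A | c / 2 * (n : ℝ) ^ t ≤ #(cliquesIn G t (neighborsIn G A x))}
  have hBA : B ⊆ A := filter_subset _ _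
  have hBcard : c / 2 * n ≤ #B := mul_le_card_filter_le_card_cliquesIn hc.le hA hcount
  have hindep : G.IndepSetFreeOn B m := by
    refine indepSetFreeOn_of_card_cliquesIn_inter_le (t := t) (A := A)
      (d := c / 2 * (n : ℝ) ^ t) (e := 1 / (2 * (m : ℝ) ^ 2) * (n : ℝ) ^ t) (by positivity)
      (fun x hx => (mem_filter.1 hx).2)
      (fun x hx y hy hxy hadj => (hfew x (hBA hx) y (hBA hy) hxy hadj).le) ?_
    have hm0 : (m : ℝ) ≠ 0 := fun h => by norm_num [h] at hm
    have hpow : (#(cliquesIn G t A) : ℝ) ≤ (n : ℝ) ^ t := by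
      exact_mod_cast card_cliquesIn_le_pow hA
    calc (#(cliquesIn G t A) : ℝ) + (m : ℝ) ^ 2 * (1 / (2 * (m : ℝ) ^ 2) * (n : ℝ) ^ t)
        = #(cliquesIn G t A) + (n : ℝ) ^ t / 2 := by field_simp
      _ ≤ 3 / 2 * (n : ℝ) ^ t := by linarith
      _ < c * m / 2 * (n : ℝ) ^ t := by gcongr; linarith
      _ = m * (c / 2 * (n : ℝ) ^ t) := by ring
  obtain ⟨K, hKB, hK, hle⟩ := exists_isClique_card_le_mul_of_indepSetFreeOn hindep
    fun h => hblowup (h.mono hBA)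
  exact ⟨K, hKB.trans hBA, hK, hBcard.trans (by exact_mod_cast hle)⟩

end CliqueCount

theorem stmt12_general (t : ℕ) {c : ℝ} (hc : 0 < c) :
    ∃ c' : ℝ, 0 < c' ∧ ∀ {V : Type*} [DecidableEq V] (G : SimpleGraph V) [DecidableRel G.Adj]
      {n : ℕ} {A : Finset V}, #A ≤ n → c * (n : ℝ) ^ t ≤ #(cliquesIn G t A) →
      ¬ HasInducedBlowup G t A → ∃ K ⊆ A, G.IsClique (K : Set V) ∧ c' * n ≤ #K := by
  induction t generalizing c with
  | zero => exact ⟨1, one_pos, fun G _ _ _ _ _ h => absurd hasInducedBlowup_zero h⟩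
  | succ t ih =>
    obtain ⟨m, hm⟩ := exists_nat_gt (4 / c)
    have hmc : 4 < c * m := (div_lt_iff₀' hc).1 hm
    have hm0 : (0 : ℝ) < m := (div_pos four_pos hc).trans hm
    obtain ⟨δ, hδ, ih⟩ := ih (c := 1 / (2 * (m : ℝ) ^ 2)) (by positivity)
    refine ⟨min δ (c / 2 / 3 ^ (t + 1 + m)), by positivity, fun G _ n A hA hcount hblowup => ?_⟩
    obtain ⟨x, hx, y, hy, hxy, hadj, hmany⟩ | ⟨K, hKA, hK, hcard⟩ :=
      exists_le_card_cliquesIn_inter_or_exists_isClique hmc hA hcount hblowup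
    · have hsub : neighborsIn G A x ∩ neighborsIn G A y ⊆ A :=
        inter_subset_left.trans neighborsIn_subset
      obtain ⟨K, hKN, hK, hcard⟩ := ih G ((card_le_card hsub).trans hA) hmany
        fun h => hblowup (h.succ hx hy hxy hadj)
      refine ⟨K, hKN.trans hsub, hK, le_trans ?_ hcard⟩
      gcongr
      exact min_le_left _ _
    · refine ⟨K, hKA, hK, ?_⟩
      calc min δ (c / 2 / 3 ^ (t + 1 + m)) * n ≤ c / 2 / 3 ^ (t + 1 + m) * n := by
            gcongr
            exact min_le_right _ _
        _ = c / 2 * n / 3 ^ (t + 1 + m) := div_mul_eq_mul_div _ _ _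
        _ ≤ #K := (div_le_iff₀' (by positivity)).2 hcard

end

open scoped Classical in
/-- Holmsen's theorem: a graph with positive `K_t`-density and no induced
2-blowup of `K_t` contains a linear-size clique. -/
theorem stmt12 (t : ℕ) (ht : 2 ≤ t) (c : ℝ) (hc : 0 < c) :
    ∃ c' : ℝ, 0 < c' ∧ ∀ n : ℕ, ∀ G : SimpleGraph (Fin n),
      c * (n : ℝ) ^ t ≤
        (((Finset.powersetCard t (Finset.univ : Finset (Fin n))).filter
          (fun S : Finset (Fin n) => G.IsClique (S : Set (Fin n)))).card : ℝ) →
      (¬ ∃ f : Fin t × Fin 2 → Fin n, Function.Injective f ∧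
        ∀ u v : Fin t × Fin 2, G.Adj (f u) (f v) ↔ u.1 ≠ v.1) →
      ∃ S : Finset (Fin n), G.IsClique (S : Set (Fin n)) ∧ c' * (n : ℝ) ≤ (S.card : ℝ) := by
  obtain ⟨c', hc', h⟩ := stmt12_general t hc
  refine ⟨c', hc', fun n G hcount hG => ?_⟩
  obtain ⟨K, -, hK⟩ := h G (Finset.card_fin n).le hcount fun ⟨f, hinj, _, hf⟩ => hG ⟨f, hinj, hf⟩
  exact ⟨K, hK⟩
end
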